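/- arXiv:2012.06101 — 3 statements merged into one kernel-verified Lean document; each statement's English description precedes it below -/
import Mathlib

section
/- Let G be a finite simple graph with at least three vertices that is not isomorphic to the complete graph K_4. Then G is primarily orientable (i.e., G admits a prime orientation) if and only if both of the following hold: (1) G is connected, and (2) for every stable module S of G, 2^(d_G(S)) ≥ |S| (equivalently, d_G(S) ≥ log₂|S|). -/
variable {V : Type*}

/-- `M` is a module of the simple graph `G`: every vertex outside `M` is adjacent
to every vertex of `M` or to no vertex of `M`. -/
def GraphModule (G : SimpleGraph V) (M : Set V) : Prop :=
  ∀ v ∉ M, (∀ x ∈ M, G.Adj v x) ∨ (∀ x ∈ M, ¬ G.Adj v x)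

/-- `M` is a module of the digraph with arc relation `D`. -/
def DigraphModule (D : V → V → Prop) (M : Set V) : Prop :=
  ∀ v ∉ M, ∀ x ∈ M, ∀ y ∈ M, (D v x ↔ D v y) ∧ (D x v ↔ D y v)

/-- The digraph `D` is an orientation of the simple graph `G`: there is an arc between
`x` and `y` (in exactly one direction) iff `x` and `y` are adjacent in `G`. -/
def IsOrientation (G : SimpleGraph V) (D : V → V → Prop) : Prop :=
  ∀ x y : V, ((D x y ∨ D y x) ↔ G.Adj x y) ∧ ¬ (D x y ∧ D y x)

/-- A graph is prime if it has at least 3 vertices and all its modules are trivial. -/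
def GraphPrime [Fintype V] (G : SimpleGraph V) : Prop :=
  3 ≤ Fintype.card V ∧
    ∀ M : Set V, GraphModule G M → M.Subsingleton ∨ M = Set.univ

/-- A digraph is prime if it has at least 3 vertices and all its modules are trivial. -/
def DigraphPrime [Fintype V] (D : V → V → Prop) : Prop :=
  3 ≤ Fintype.card V ∧
    ∀ M : Set V, DigraphModule D M → M.Subsingleton ∨ M = Set.univ

/-- A graph is primarily orientable if it admits a prime orientation. -/
def PrimarilyOrientable [Fintype V] (G : SimpleGraph V) : Prop :=
  ∃ D : V → V → Prop, IsOrientation G D ∧ DigraphPrime D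

/-- `S` is a stable module (s-module) of `G`: a module of size at least 2 inducing no edges. -/
def StableModule (G : SimpleGraph V) (S : Set V) : Prop :=
  GraphModule G S ∧ 2 ≤ S.ncard ∧ ∀ x ∈ S, ∀ y ∈ S, ¬ G.Adj x y

/-- The neighbourhood `N_G(M)` of a module `M`: the vertices outside `M` adjacent to
some (equivalently, every) vertex of `M`. -/
def modNbhd (G : SimpleGraph V) (M : Set V) : Set V :=
  {v | v ∉ M ∧ ∃ x ∈ M, G.Adj v x}

/-- `M` is a module of the subgraph of `G` induced on the vertex set `X`. -/
def ModuleOn (G : SimpleGraph V) (X M : Set V) : Prop :=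
  M ⊆ X ∧ ∀ v ∈ X \ M, (∀ x ∈ M, G.Adj v x) ∨ (∀ x ∈ M, ¬ G.Adj v x)

/-- `S` is an s-duo (stable module of size 2) of the subgraph of `G` induced on `X`. -/
def SduoOn (G : SimpleGraph V) (X S : Set V) : Prop :=
  ModuleOn G X S ∧ S.ncard = 2 ∧ ∀ x ∈ S, ∀ y ∈ S, ¬ G.Adj x y

/-- `S` is an s-duo of `G`. -/
def Sduo (G : SimpleGraph V) (S : Set V) : Prop :=
  SduoOn G Set.univ S

/-- `G` has no s-duo. -/
def SduoFree (G : SimpleGraph V) : Prop := ∀ S : Set V, ¬ Sduo G S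

/-- `M` is a module of the subdigraph of `D` induced on the vertex set `X`. -/
def DModuleOn (D : V → V → Prop) (X M : Set V) : Prop :=
  M ⊆ X ∧ ∀ v ∈ X \ M, ∀ x ∈ M, ∀ y ∈ M, (D v x ↔ D v y) ∧ (D x v ↔ D y v)

/-- The subdigraph of `D` induced on `X` is prime. -/
def DPrimeOn (D : V → V → Prop) (X : Set V) : Prop :=
  3 ≤ X.ncard ∧ ∀ M : Set V, DModuleOn D X M → M.Subsingleton ∨ M = X

/-- `Ext_D(X)`: vertices `v ∉ X` such that `D[X ∪ {v}]` is prime. -/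
def ExtD (D : V → V → Prop) (X : Set V) : Set V :=
  {v | v ∉ X ∧ DPrimeOn D (X ∪ {v})}

/-- `⟨X⟩_D`: vertices `v ∉ X` such that `X` is a module of `D[X ∪ {v}]`. -/
def InnD (D : V → V → Prop) (X : Set V) : Set V :=
  {v | v ∉ X ∧ DModuleOn D (X ∪ {v}) X}

/-- `X_D(u)`: vertices `v ∉ X` such that `{u, v}` is a module of `D[X ∪ {v}]`. -/
def AttD (D : V → V → Prop) (X : Set V) (u : V) : Set V :=
  {v | v ∉ X ∧ DModuleOn D (X ∪ {v}) ({u, v} : Set V)}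



/-- Reorient all the edges at `v`, the out-neighbours of `v` being those satisfying `P`. -/
def reorient (G : SimpleGraph V) (D : V → V → Prop) (v : V) (P : V → Prop) : V → V → Prop :=
  fun x y => G.Adj x y ∧ ((x = v ∧ P y) ∨ (x ≠ v ∧ y = v ∧ ¬ P x) ∨ (x ≠ v ∧ y ≠ v ∧ D x y))

lemma reorient_orient {G : SimpleGraph V} {D : V → V → Prop} (hD : IsOrientation G D) (v : V)
    (P : V → Prop) : IsOrientation G (reorient G D v P) := by
  intro x y
  have h := hD x y
  have hs := G.adj_comm x y
  have hl : ¬ G.Adj x x := G.irrefl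
  unfold reorient
  by_cases hxy : x = y
  · subst hxy; simp
  by_cases hx : x = v
  · subst hx
    have : ¬ y = x := fun e => hxy e.symm
    simp [this, ← hs]
    tauto
  by_cases hy : y = v
  · subst hy
    simp [hx, ← hs]
    tauto
  · simp [hx, hy, ← hs]
    tauto

lemma reorient_of_ne {G : SimpleGraph V} {D : V → V → Prop} (hD : IsOrientation G D) {v : V}
    (P : V → Prop) {x y : V} (hx : x ≠ v) (hy : y ≠ v) : reorient G D v P x y ↔ D x y := by
  have := (hD x y).1
  unfold reorient
  tauto

lemma reorient_out {G : SimpleGraph V} {D : V → V → Prop} {v : V}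
    (P : V → Prop) {y : V} : reorient G D v P v y ↔ G.Adj v y ∧ P y := by
  unfold reorient
  simp

lemma reorient_in {G : SimpleGraph V} {D : V → V → Prop} {v : V}
    (P : V → Prop) {y : V} : reorient G D v P y v ↔ G.Adj v y ∧ ¬ P y := by
  unfold reorient
  rw [G.adj_comm y v]
  by_cases h : y = v
  · subst h; simp
  · simp [h]

lemma orient_exists (G : SimpleGraph V) : ∃ D : V → V → Prop, IsOrientation G D := by
  classical
  refine ⟨fun x y => G.Adj x y ∧ WellOrderingRel x y, fun x y => ?_⟩
  have hs := G.adj_comm x y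
  refine ⟨⟨fun h => ?_, fun h => ?_⟩, fun h => ?_⟩
  · tauto
  · rcases trichotomous_of WellOrderingRel x y with h1 | h1 | h1
    · exact Or.inl ⟨h, h1⟩
    · exact absurd h1 h.ne
    · exact Or.inr ⟨hs.1 h, h1⟩
  · exact asymm_of WellOrderingRel h.1.2 h.2.2

lemma orient_adj {G : SimpleGraph V} {D : V → V → Prop} (hD : IsOrientation G D) {x y : V} :
    G.Adj x y ↔ (D x y ∨ D y x) := (hD x y).1.symm

lemma prime_mod {D : V → V → Prop} {X M : Set V} (h : DPrimeOn D X) (hM : DModuleOn D X M)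
    {x y : V} (hx : x ∈ M) (hy : y ∈ M) (hxy : x ≠ y) : M = X := by
  rcases h.2 M hM with h1 | h1
  · exact absurd (h1 hx hy) hxy
  · exact h1

lemma exists_third {X : Set V} (h : 3 ≤ X.ncard) (a b : V) : ∃ c ∈ X, c ≠ a ∧ c ≠ b := by
  by_contra! hc
  have hsub : X ⊆ {a, b} := by
    intro c hcX
    by_cases h1 : c = a
    · simp [h1]
    · simp [hc c hcX h1]
  have := Set.ncard_le_ncard hsub (by simp)
  have : ({a, b} : Set V).ncard ≤ 2 := (Set.ncard_insert_le a {b}).trans (by simp)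
  omega

lemma no_pair {D : V → V → Prop} {X : Set V} (h : DPrimeOn D X) {b c : V} (hb : b ∈ X)
    (hc : c ∈ X) (hbc : b ≠ c)
    (hs : ∀ x ∈ X, x ≠ b → x ≠ c → ((D x b ↔ D x c) ∧ (D b x ↔ D c x))) : False := by
  obtain ⟨d, hd, hdb, hdc⟩ := exists_third h.1 b c
  have hM : DModuleOn D X {b, c} := by
    refine ⟨?_, ?_⟩
    · rintro x (rfl | rfl) <;> assumption
    · rintro x ⟨hx, hxn⟩ y hy z hz
      simp at hxn hy hz
      have := hs x hx hxn.1 hxn.2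
      rcases hy with rfl | rfl <;> rcases hz with rfl | rfl <;> tauto
  have := prime_mod h hM (x := b) (y := c) (by simp) (by simp) hbc
  rw [← this] at hd
  simp at hd
  tauto

lemma no_unif {D : V → V → Prop} {X : Set V} (h : DPrimeOn D X) {c : V} (hc : c ∈ X)
    (hs : ∀ x ∈ X, ∀ y ∈ X, x ≠ c → y ≠ c → ((D c x ↔ D c y) ∧ (D x c ↔ D y c))) : False := by
  obtain ⟨d, hd, hdc, -⟩ := exists_third h.1 c c
  obtain ⟨e, he, hec, hed⟩ := exists_third h.1 c d
  have hM : DModuleOn D X (X \ {c}) := by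
    refine ⟨Set.sdiff_subset, ?_⟩
    rintro x ⟨hx, hxn⟩ y hy z hz
    have hxc : x = c := by
      by_contra hne
      exact hxn ⟨hx, hne⟩
    subst hxc
    exact hs y hy.1 z hz.1 hy.2 hz.2
  have := prime_mod h hM (x := e) (y := d) ⟨he, hec⟩ ⟨hd, hdc⟩ hed
  rw [← this] at hc
  exact hc.2 rfl

lemma mod_restrict {D : V → V → Prop} {X Y M : Set V} (h : DModuleOn D Y M) (hXY : X ⊆ Y) :
    DModuleOn D X (M ∩ X) := by
  refine ⟨Set.inter_subset_right, ?_⟩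
  rintro v ⟨hv, hvn⟩ x hx y hy
  exact h.2 v ⟨hXY hv, fun hm => hvn ⟨hm, hv⟩⟩ x hx.1 y hy.1

/-- The trace on `X` of a module on `Y ⊇ X`. -/
lemma mod_trace {D : V → V → Prop} {X Y M : Set V} (hX : DPrimeOn D X) (h : DModuleOn D Y M)
    (hXY : X ⊆ Y) : (∀ x ∈ X, x ∈ M) ∨ (∀ x ∈ X, ∀ y ∈ X, x ∈ M → y ∈ M → x = y) := by
  rcases hX.2 _ (mod_restrict h hXY) with h1 | h1
  · right
    intro x hx y hy hxM hyM
    exact h1 ⟨hxM, hx⟩ ⟨hyM, hy⟩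
  · left
    intro x hx
    rw [← h1] at hx
    exact hx.1

lemma prime_congr {D D' : V → V → Prop} {X : Set V}
    (h : ∀ x ∈ X, ∀ y ∈ X, (D' x y ↔ D x y)) (hX : DPrimeOn D X) : DPrimeOn D' X := by
  refine ⟨hX.1, fun M hM => hX.2 M ⟨hM.1, fun v hv x hx y hy => ?_⟩⟩
  have := hM.2 v hv x hx y hy
  rw [h v hv.1 x (hM.1 hx), h v hv.1 y (hM.1 hy), h x (hM.1 hx) v hv.1, h y (hM.1 hy) v hv.1]
    at this
  exact this

/-- Criterion for primality in terms of pairs. -/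
lemma prime_intro [Finite V] {D : V → V → Prop} {X Y : Set V} (hX : DPrimeOn D X) (hXY : X ⊆ Y)
    (h : ∀ M, DModuleOn D Y M → ∀ p ∈ M, ∀ q ∈ M, p ≠ q → ∀ r ∈ Y, r ∉ M → False) :
    DPrimeOn D Y := by
  refine ⟨hX.1.trans (Set.ncard_le_ncard hXY (Set.toFinite _)), fun M hM => ?_⟩
  by_cases hs : M.Subsingleton
  · exact Or.inl hs
  right
  rw [Set.not_subsingleton_iff] at hs
  obtain ⟨p, hp, q, hq, hpq⟩ := hs
  refine Set.Subset.antisymm hM.1 fun r hr => ?_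
  by_contra hrM
  exact h M hM p hp q hq hpq r hr hrM

/-- Modules of a one-vertex extension. -/
lemma ext_one_mod {D : V → V → Prop} {X M : Set V} (hX : DPrimeOn D X) {v : V} (hv : v ∉ X)
    (hM : DModuleOn D (insert v X) M) {p q r : V} (hp : p ∈ M) (hq : q ∈ M) (hpq : p ≠ q)
    (hr : r ∈ insert v X) (hrM : r ∉ M) :
    M = X ∨ ∃ u ∈ X, M = {u, v} := by
  rcases mod_trace hX hM (Set.subset_insert _ _) with h | h
  · left
    have hvM : v ∉ M := by
      rcases hr with rfl | hr
      · exact hrM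
      · exact absurd (h r hr) hrM
    refine Set.Subset.antisymm (fun x hx => ?_) h
    rcases hM.1 hx with rfl | hx'
    · exact absurd hx hvM
    · exact hx'
  · right
    have key : ∀ p ∈ M, ∀ q ∈ M, p ≠ q → p ∈ X → ∃ u ∈ X, M = {u, v} := by
      intro p hp q hq hpq hpX
      have hqv : q = v := by
        rcases hM.1 hq with e | hqX
        · exact e
        · exact absurd (h p hpX q hqX hp hq) hpq
      subst hqv
      refine ⟨p, hpX, Set.Subset.antisymm (fun x hx => ?_) ?_⟩
      · rcases hM.1 hx with rfl | hx'
        · simp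
        · simp [h x hx' p hpX hx hp]
      · rintro x (rfl | rfl) <;> assumption
    rcases hM.1 hp with e | hpX
    · rcases hM.1 hq with e' | hqX
      · exact absurd (e.trans e'.symm) hpq
      · exact key q hq p hp hpq.symm hqX
    · exact key p hp q hq hpq hpX


/-- Two-vertex extension by twins of two vertices. -/
lemma ext_two_twins [Finite V] {D : V → V → Prop} {X : Set V} (hX : DPrimeOn D X) {u w b c : V}
    (hb : b ∈ X) (hc : c ∈ X) (hbc : b ≠ c)
    (hub : ∀ x ∈ X, (D u x ↔ D b x) ∧ (D x u ↔ D x b))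
    (hwc : ∀ x ∈ X, (D w x ↔ D c x) ∧ (D x w ↔ D x c))
    (hne : ¬ ((D w u ∨ D u w) ↔ (D w b ∨ D b w))) :
    DPrimeOn D (insert w (insert u X)) := by
  have hsub : X ⊆ insert w (insert u X) := fun x hx => Or.inr (Or.inr hx)
  have hwY : w ∈ insert w (insert u X) := Or.inl rfl
  have huY : u ∈ insert w (insert u X) := Or.inr (Or.inl rfl)
  refine prime_intro hX hsub fun M hM p hp q hq hpq r hr hrM => ?_
  -- a vertex of X whose relations to the others are constant
  have iso : ∀ t d, d ∈ X → t ∉ M → (∀ x ∈ X, x ∈ M) → t ∈ insert w (insert u X) →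
      (∀ x ∈ X, (D t x ↔ D d x) ∧ (D x t ↔ D x d)) → False := by
    intro t d hd htM hall htY htd
    refine no_unif hX hd fun x hx y hy _ _ => ?_
    have h1 := hM.2 t ⟨htY, htM⟩ x (hall x hx) y (hall y hy)
    have h2 := htd x hx
    have h3 := htd y hy
    grind only
  -- a twin in M together with an element of X forces equality
  have tw : ∀ t d e, d ∈ X → e ∈ X → t ∈ M → e ∈ M →
      (∀ x ∈ X, ∀ y ∈ X, x ∈ M → y ∈ M → x = y) →
      (∀ x ∈ X, (D t x ↔ D d x) ∧ (D x t ↔ D x d)) → e = d := by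
    intro t d e hd he htM heM hs htd
    by_contra hed
    refine no_pair hX he hd hed fun x hx hxe hxd => ?_
    have hxM : x ∉ M := fun hxM => hxe (hs x hx e he hxM heM)
    have h1 := hM.2 x ⟨hsub hx, hxM⟩ e heM t htM
    have h2 := htd x hx
    grind only
  rcases mod_trace hX hM hsub with h | h
  · have huM : u ∈ M := by
      by_contra huM
      exact iso u b hb huM h huY hub
    have hwM : w ∈ M := by
      by_contra hwM
      exact iso w c hc hwM h hwY hwc
    rcases hr with rfl | rfl | hr
    · exact hrM hwM
    · exact hrM huM
    · exact hrM (h r hr)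
  · by_cases hex : ∃ e ∈ X, e ∈ M
    · obtain ⟨e, he, heM⟩ := hex
      by_cases huM : u ∈ M
      · have e1 := tw u b e hb he huM heM h hub
        subst e1
        by_cases hwM : w ∈ M
        · exact hbc (tw w c e hc he hwM heM h hwc)
        · have := hM.2 w ⟨hwY, hwM⟩ u huM e heM
          grind only
      · by_cases hwM : w ∈ M
        · have e1 := tw w c e hc he hwM heM h hwc
          subst e1
          have h1 := hM.2 u ⟨huY, huM⟩ w hwM e heM
          have h2 := hub e hc
          have h3 := hwc b hb
          grind only
        · have aux : ∀ z ∈ M, z = e := by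
            intro z hz
            rcases hM.1 hz with rfl | rfl | hzX
            · exact absurd hz hwM
            · exact absurd hz huM
            · exact h z hzX e he hz heM
          exact hpq ((aux p hp).trans (aux q hq).symm)
    · push Not at hex
      have huw : u ∈ M ∧ w ∈ M := by
        have hp' := hM.1 hp
        have hq' := hM.1 hq
        rcases hp' with rfl | rfl | h1 <;> rcases hq' with rfl | rfl | h2 <;>
          first
          | exact absurd rfl hpq
          | exact absurd hp (hex _ h1)
          | exact absurd hq (hex _ h2)
          | exact ⟨hp, hq⟩
          | exact ⟨hq, hp⟩
      refine no_pair hX hb hc hbc fun x hx _ _ => ?_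
      have h1 := hM.2 x ⟨hsub hx, hex x hx⟩ u huw.1 w huw.2
      have h2 := hub x hx
      have h3 := hwc x hx
      grind only

/-- Two-vertex extension by a twin `u` of `b` and a vertex `w` seeing only `u`. -/
lemma ext_two_pendant [Finite V] {D : V → V → Prop} {X : Set V} (hX : DPrimeOn D X) {u w b : V}
    (hb : b ∈ X)
    (hub : ∀ x ∈ X, (D u x ↔ D b x) ∧ (D x u ↔ D x b))
    (hw : ∀ x ∈ X, ¬ D w x ∧ ¬ D x w)
    (hne : D w u ∨ D u w) :
    DPrimeOn D (insert w (insert u X)) := by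
  have hsub : X ⊆ insert w (insert u X) := fun x hx => Or.inr (Or.inr hx)
  have hwY : w ∈ insert w (insert u X) := Or.inl rfl
  have huY : u ∈ insert w (insert u X) := Or.inr (Or.inl rfl)
  refine prime_intro hX hsub fun M hM p hp q hq hpq r hr hrM => ?_
  rcases mod_trace hX hM hsub with h | h
  · have huM : u ∈ M := by
      by_contra huM
      refine no_unif hX hb fun x hx y hy _ _ => ?_
      have h1 := hM.2 u ⟨huY, huM⟩ x (h x hx) y (h y hy)
      have h2 := hub x hx
      have h3 := hub y hy
      grind only
    have hwM : w ∈ M := by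
      by_contra hwM
      have h1 := hM.2 w ⟨hwY, hwM⟩ u huM b (h b hb)
      have h2 := hw b hb
      grind only
    rcases hr with rfl | rfl | hr
    · exact hrM hwM
    · exact hrM huM
    · exact hrM (h r hr)
  · -- w is not in M together with an element of X or with u
    by_cases hex : ∃ e ∈ X, e ∈ M
    · obtain ⟨e, he, heM⟩ := hex
      have hxM : ∀ x ∈ X, x ≠ e → x ∉ M := fun x hx hxe hxM => hxe (h x hx e he hxM heM)
      have hwM : w ∉ M := by
        intro hwM
        refine no_unif hX he fun x hx y hy hxe hye => ?_
        have h1 := hM.2 x ⟨hsub hx, hxM x hx hxe⟩ w hwM e heM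
        have h2 := hM.2 y ⟨hsub hy, hxM y hy hye⟩ w hwM e heM
        have h3 := hw x hx
        have h4 := hw y hy
        grind only
      by_cases huM : u ∈ M
      · have h1 := hM.2 w ⟨hwY, hwM⟩ u huM e heM
        have h2 := hw e he
        grind only
      · have aux : ∀ z ∈ M, z = e := by
          intro z hz
          rcases hM.1 hz with rfl | rfl | hzX
          · exact absurd hz hwM
          · exact absurd hz huM
          · exact h z hzX e he hz heM
        exact hpq ((aux p hp).trans (aux q hq).symm)
    · push Not at hex
      have huw : u ∈ M ∧ w ∈ M := by
        have hp' := hM.1 hp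
        have hq' := hM.1 hq
        rcases hp' with rfl | rfl | h1 <;> rcases hq' with rfl | rfl | h2 <;>
          first
          | exact absurd rfl hpq
          | exact absurd hp (hex _ h1)
          | exact absurd hq (hex _ h2)
          | exact ⟨hp, hq⟩
          | exact ⟨hq, hp⟩
      have hz : ∀ x ∈ X, ¬ D b x ∧ ¬ D x b := by
        intro x hx
        have h1 := hM.2 x ⟨hsub hx, hex x hx⟩ u huw.1 w huw.2
        have h2 := hub x hx
        have h3 := hw x hx
        grind only
      refine no_unif hX hb fun x hx y hy _ _ => ?_
      have h1 := hz x hx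
      have h2 := hz y hy
      grind only

/-- Two-vertex extension used for `K₅`. -/
lemma ext_two_dom [Finite V] {D : V → V → Prop} {X : Set V} (hX : DPrimeOn D X) {v w b c : V}
    (hb : b ∈ X) (hc : c ∈ X) (hv : ∀ x ∈ X, D v x ∧ ¬ D x v) (hwv : D w v) (hvw : ¬ D v w)
    (hwb : D w b) (hwc : D c w) (hwc' : ¬ D w c) :
    DPrimeOn D (insert w (insert v X)) := by
  have hsub : X ⊆ insert w (insert v X) := fun x hx => Or.inr (Or.inr hx)
  have hwY : w ∈ insert w (insert v X) := Or.inl rfl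
  have hvY : v ∈ insert w (insert v X) := Or.inr (Or.inl rfl)
  refine prime_intro hX hsub fun M hM p hp q hq hpq r hr hrM => ?_
  rcases mod_trace hX hM hsub with h | h
  · have hwM : w ∈ M := by
      by_contra hwM
      have h1 := hM.2 w ⟨hwY, hwM⟩ b (h b hb) c (h c hc)
      grind only
    have hvM : v ∈ M := by
      by_contra hvM
      have h1 := hM.2 v ⟨hvY, hvM⟩ w hwM b (h b hb)
      have h2 := hv b hb
      grind only
    rcases hr with rfl | rfl | hr
    · exact hrM hwM
    · exact hrM hvM
    · exact hrM (h r hr)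
  · by_cases hex : ∃ e ∈ X, e ∈ M
    · obtain ⟨e, he, heM⟩ := hex
      have hxM : ∀ x ∈ X, x ≠ e → x ∉ M := fun x hx hxe hxM => hxe (h x hx e he hxM heM)
      have hvM : v ∉ M := by
        intro hvM
        refine no_unif hX he fun x hx y hy hxe hye => ?_
        have h1 := hM.2 x ⟨hsub hx, hxM x hx hxe⟩ v hvM e heM
        have h2 := hM.2 y ⟨hsub hy, hxM y hy hye⟩ v hvM e heM
        have h3 := hv x hx
        have h4 := hv y hy
        grind only
      by_cases hwM : w ∈ M
      · have h1 := hM.2 v ⟨hvY, hvM⟩ w hwM e heM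
        have h2 := hv e he
        grind only
      · have aux : ∀ z ∈ M, z = e := by
          intro z hz
          rcases hM.1 hz with rfl | rfl | hzX
          · exact absurd hz hwM
          · exact absurd hz hvM
          · exact h z hzX e he hz heM
        exact hpq ((aux p hp).trans (aux q hq).symm)
    · push Not at hex
      have huw : v ∈ M ∧ w ∈ M := by
        have hp' := hM.1 hp
        have hq' := hM.1 hq
        rcases hp' with rfl | rfl | h1 <;> rcases hq' with rfl | rfl | h2 <;>
          first
          | exact absurd rfl hpq
          | exact absurd hp (hex _ h1)
          | exact absurd hq (hex _ h2)
          | exact ⟨hp, hq⟩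
          | exact ⟨hq, hp⟩
      have h1 := hM.2 c ⟨hsub hc, hex c hc⟩ v huw.1 w huw.2
      have h2 := hv c hc
      grind only

/-- Three vertices `x - y - z` carry a prime orientation. -/
lemma prime_three {G : SimpleGraph V} {x y z : V} (hxy : G.Adj x y)
    (hyz : G.Adj y z) (hxz : x ≠ z) :
    ∃ D, IsOrientation G D ∧ DPrimeOn D ({x, y, z} : Set V) := by
  obtain ⟨D, hD⟩ := orient_exists G
  have hD1 := reorient_orient hD z (· = x)
  have hD2 := reorient_orient hD1 y (· = z)
  refine ⟨_, hD2, ?_⟩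
  have a1 := hxy.ne
  have a2 := hyz.ne
  set E := reorient G (reorient G D z (· = x)) y (· = z) with hE
  have e1 : E y z := by rw [hE, reorient_out]; exact ⟨hyz, rfl⟩
  have e2 : E x y := by rw [hE, reorient_in]; exact ⟨hxy.symm, hxz⟩
  have e3 : ¬ E x z := by
    rw [hE, reorient_of_ne hD1 _ a1 a2.symm, reorient_in]
    grind only
  have e4 : ¬ E z y := fun h => (hD2 y z).2 ⟨e1, h⟩
  have e5 : ¬ E y x := fun h => (hD2 x y).2 ⟨e2, h⟩
  refine ⟨?_, fun M hM => ?_⟩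
  · have := Set.ncard_eq_three.2 ⟨x, y, z, a1, hxz, a2, rfl⟩
    exact this.ge
  have hx : x ∈ ({x, y, z} : Set V) := by simp
  have hy : y ∈ ({x, y, z} : Set V) := by simp
  have hz : z ∈ ({x, y, z} : Set V) := by simp
  have k1 : x ∈ M → y ∈ M → z ∈ M := by
    intro h1 h2
    by_contra h3
    have := hM.2 z ⟨hz, h3⟩ x h1 y h2
    grind only
  have k2 : y ∈ M → z ∈ M → x ∈ M := by
    intro h1 h2
    by_contra h3
    have := hM.2 x ⟨hx, h3⟩ y h1 z h2
    grind only
  have k3 : x ∈ M → z ∈ M → y ∈ M := by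
    intro h1 h2
    by_contra h3
    have := hM.2 y ⟨hy, h3⟩ x h1 z h2
    grind only
  by_cases hs : M.Subsingleton
  · exact Or.inl hs
  right
  rw [Set.not_subsingleton_iff] at hs
  obtain ⟨p, hp, q, hq, hpq⟩ := hs
  have hall : x ∈ M ∧ y ∈ M ∧ z ∈ M := by
    rcases hM.1 hp with rfl | rfl | rfl <;> rcases hM.1 hq with rfl | rfl | rfl <;> grind only
  refine Set.Subset.antisymm hM.1 ?_
  rintro t (rfl | rfl | rfl) <;> grind only


lemma pow_aux1 (k : ℕ) (hk : 3 ≤ k) : 2 * k + 2 ≤ 2 ^ k ∧ (k ≠ 3 → 2 * k + 2 < 2 ^ k) := by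
  induction k, hk using Nat.le_induction with
  | base => simp
  | succ n hn ih =>
    rw [pow_succ]
    constructor
    · omega
    · intro _
      omega

/-- The obstruction to a good choice of out-neighbours of `v`. -/
lemma ext_one_bad [Finite V] {G : SimpleGraph V} {D : V → V → Prop} (hD : IsOrientation G D)
    {X : Set V} (hX : DPrimeOn D X) {v : V} (hv : v ∉ X) (hnb : ∃ x ∈ X, G.Adj v x)
    (P : V → Prop) (hbad : ¬ DPrimeOn (reorient G D v P) (insert v X)) :
    ((∀ x ∈ X, G.Adj v x) ∧ ((∀ x ∈ X, P x) ∨ (∀ x ∈ X, ¬ P x))) ∨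
    ∃ u ∈ X, (∀ x ∈ X, x ≠ u → (G.Adj v x ↔ G.Adj u x)) ∧
      (∀ x ∈ X, x ≠ u → G.Adj v x → (P x ↔ D u x)) := by
  have hne : ∀ x ∈ X, x ≠ v := fun x hx e => hv (e ▸ hx)
  have hX' : DPrimeOn (reorient G D v P) X :=
    prime_congr (fun x hx y hy => reorient_of_ne hD P (hne x hx) (hne y hy)) hX
  by_contra hcon
  apply hbad
  refine prime_intro hX' (Set.subset_insert _ _) fun M hM p hp q hq hpq r hr hrM => hcon ?_
  rcases ext_one_mod hX' hv hM hp hq hpq hr hrM with rfl | ⟨u, hu, rfl⟩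
  · left
    obtain ⟨x0, hx0, ha⟩ := hnb
    have key : ∀ x ∈ M, G.Adj v x ∧ (P x ↔ P x0) := by
      intro x hx
      have h := hM.2 v ⟨Or.inl rfl, hv⟩ x hx x0 hx0
      rw [reorient_out, reorient_out, reorient_in, reorient_in] at h
      tauto
    refine ⟨fun x hx => (key x hx).1, ?_⟩
    by_cases hP : P x0
    · exact Or.inl fun x hx => (key x hx).2.2 hP
    · exact Or.inr fun x hx h => hP ((key x hx).2.1 h)
  · right
    have key : ∀ x ∈ X, x ≠ u → (G.Adj v x ↔ G.Adj u x) ∧ (G.Adj v x → (P x ↔ D u x)) := by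
      intro x hx hxu
      have h := hM.2 x ⟨Or.inr hx, by simp [hxu, hne x hx]⟩ u (by simp) v (by simp)
      rw [reorient_out, reorient_in, reorient_of_ne hD P (hne x hx) (hne u hu),
        reorient_of_ne hD P (hne u hu) (hne x hx)] at h
      have h1 := hD u x
      tauto
    exact ⟨u, hu, fun x hx hxu => (key x hx hxu).1, fun x hx hxu => (key x hx hxu).2⟩

/-- One-vertex extension. -/
lemma ext_one [Finite V] {G : SimpleGraph V} {D : V → V → Prop} (hD : IsOrientation G D)
    {X : Set V} (hX : DPrimeOn D X) {v : V} (hv : v ∉ X) (hnb : ∃ x ∈ X, G.Adj v x) :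
    (∃ D', IsOrientation G D' ∧ DPrimeOn D' (insert v X)) ∨
    (X.ncard = 3 ∧ ∀ x ∈ X, G.Adj v x ∧ ∀ y ∈ X, x ≠ y → G.Adj x y) ∨
    2 ^ {x | x ∈ X ∧ G.Adj v x}.ncard ≤ {u | u ∈ X ∧ ∀ y ∈ X, (G.Adj u y ↔ G.Adj v y)}.ncard := by
  classical
  by_cases hgood : ∃ P : V → Prop, DPrimeOn (reorient G D v P) (insert v X)
  · obtain ⟨P, hP⟩ := hgood
    exact Or.inl ⟨_, reorient_orient hD v P, hP⟩
  right
  have hbad : ∀ P : V → Prop, _ := fun P => ext_one_bad hD hX hv hnb P (fun h => hgood ⟨P, h⟩)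
  have := Fintype.ofFinite V
  set N : Finset V := Finset.univ.filter (fun x => x ∈ X ∧ G.Adj v x) with hN
  set B : Finset V := Finset.univ.filter
    (fun u => u ∈ X ∧ ∀ y ∈ X, (G.Adj u y ↔ G.Adj v y)) with hB
  have hNc : {x | x ∈ X ∧ G.Adj v x}.ncard = N.card := by
    rw [← Set.ncard_coe_finset]; congr 1; ext x; simp [hN]
  have hBc : {u | u ∈ X ∧ ∀ y ∈ X, (G.Adj u y ↔ G.Adj v y)}.ncard = B.card := by
    rw [← Set.ncard_coe_finset]; congr 1; ext x; simp [hB]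
  have memN : ∀ x, x ∈ N ↔ x ∈ X ∧ G.Adj v x := by intro x; simp [hN]
  have memB : ∀ u, u ∈ B ↔ u ∈ X ∧ ∀ y ∈ X, (G.Adj u y ↔ G.Adj v y) := by intro x; simp [hB]
  rw [hNc, hBc]
  by_cases hBne : B.Nonempty
  · right
    obtain ⟨b, hb⟩ := hBne
    rw [memB] at hb
    have hvb : ¬ G.Adj v b := by
      rw [← hb.2 b hb.1]
      exact G.irrefl
    have hsub : N.powerset ⊆ B.image (fun u => N.filter (fun x => D u x)) := by
      intro P hP
      rw [Finset.mem_powerset] at hP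
      rw [Finset.mem_image]
      rcases hbad (· ∈ P) with ⟨h, -⟩ | ⟨u, hu, h1, h2⟩
      · exact absurd (h b hb.1) hvb
      · have hvu : ¬ G.Adj v u := by
          intro hvu
          have hbu := (hb.2 u hu).2 hvu
          exact hvb ((h1 b hb.1 hbu.ne).2 hbu.symm)
        refine ⟨u, (memB u).2 ⟨hu, fun y hy => ?_⟩, ?_⟩
        · by_cases hyu : y = u
          · subst hyu; simp [hvu]
          · exact (h1 y hy hyu).symm
        · ext x
          rw [Finset.mem_filter]
          constructor
          · rintro ⟨hx, hd⟩
            rw [memN] at hx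
            have hxu : x ≠ u := by rintro rfl; exact hvu hx.2
            exact (h2 x hx.1 hxu hx.2).2 hd
          · intro hx
            have hxN := hP hx
            have hxN' := (memN x).1 hxN
            have hxu : x ≠ u := by rintro rfl; exact hvu hxN'.2
            exact ⟨hxN, (h2 x hxN'.1 hxu hxN'.2).1 hx⟩
    calc 2 ^ N.card = N.powerset.card := (Finset.card_powerset N).symm
      _ ≤ _ := Finset.card_le_card hsub
      _ ≤ _ := Finset.card_image_le
  · left
    rw [Finset.not_nonempty_iff_eq_empty] at hBne
    set A : Finset V := N.filter (fun u => ∀ x ∈ X, x ≠ u → (G.Adj v x ↔ G.Adj u x)) with hA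
    set E : Finset (Finset V) := if (∀ x ∈ X, G.Adj v x) then {∅, N} else ∅ with hE
    have hAN : A ⊆ N := Finset.filter_subset _ _
    have hsub : N.powerset ⊆ (A.image (fun u => insert u (N.filter (fun x => D u x))) ∪
        A.image (fun u => (N.filter (fun x => D u x)).erase u)) ∪ E := by
      intro P hP
      rw [Finset.mem_powerset] at hP
      rw [Finset.mem_union, Finset.mem_union]
      rcases hbad (· ∈ P) with ⟨h, h'⟩ | ⟨u, hu, h1, h2⟩
      · right
        rw [hE, if_pos h]
        rcases h' with h' | h'
        · have : P = N := Finset.Subset.antisymm hP fun x hx => h' x ((memN x).1 hx).1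
          simp [this]
        · have : P = ∅ := by
            rw [Finset.eq_empty_iff_forall_notMem]
            exact fun x hx => h' x ((memN x).1 (hP hx)).1 hx
          simp [this]
      · left
        have hvu : G.Adj v u := by
          by_contra hvu
          have : u ∈ B := (memB u).2 ⟨hu, fun y hy => by
            by_cases hyu : y = u
            · subst hyu; simp [hvu]
            · exact (h1 y hy hyu).symm⟩
          rw [hBne] at this
          simp at this
        have huN : u ∈ N := (memN u).2 ⟨hu, hvu⟩
        have huA : u ∈ A := Finset.mem_filter.2 ⟨huN, h1⟩
        have hPx : ∀ x, x ≠ u → (x ∈ P ↔ x ∈ N ∧ D u x) := by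
          intro x hxu
          constructor
          · intro hx
            have hxN := hP hx
            have hxN' := (memN x).1 hxN
            exact ⟨hxN, (h2 x hxN'.1 hxu hxN'.2).1 hx⟩
          · rintro ⟨hxN, hd⟩
            have hxN' := (memN x).1 hxN
            exact (h2 x hxN'.1 hxu hxN'.2).2 hd
        by_cases huP : u ∈ P
        · left
          rw [Finset.mem_image]
          refine ⟨u, huA, ?_⟩
          ext x
          rw [Finset.mem_insert, Finset.mem_filter]
          by_cases hxu : x = u
          · subst hxu; simp [huP]
          · simp [hxu, hPx x hxu]
        · right
          rw [Finset.mem_image]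
          refine ⟨u, huA, ?_⟩
          ext x
          rw [Finset.mem_erase, Finset.mem_filter]
          by_cases hxu : x = u
          · subst hxu; simp [huP]
          · simp [hxu, hPx x hxu]
    have hcard : 2 ^ N.card ≤ A.card + A.card + E.card := by
      calc 2 ^ N.card = N.powerset.card := (Finset.card_powerset N).symm
        _ ≤ _ := Finset.card_le_card hsub
        _ ≤ _ := Finset.card_union_le _ _
        _ ≤ _ := Nat.add_le_add_right (Finset.card_union_le _ _) _
        _ ≤ _ := by gcongr <;> exact Finset.card_image_le
    have hAc := Finset.card_le_card hAN
    by_cases hall : ∀ x ∈ X, G.Adj v x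
    · have hNX : N.card = X.ncard := by
        rw [← Set.ncard_coe_finset]; congr 1; ext x; simp [hN]; exact hall x
      have hEc : E.card ≤ 2 := by
        rw [hE, if_pos hall]; exact Finset.card_le_two
      have h3 := hX.1
      obtain ⟨p1, p2⟩ := pow_aux1 N.card (by omega)
      have hN3 : N.card = 3 := by
        by_contra hne
        have := p2 hne
        omega
      refine ⟨by omega, fun x hx => ⟨hall x hx, fun y hy hxy => ?_⟩⟩
      have hAeq : A = N := Finset.eq_of_subset_of_card_le hAN (by omega)
      have hxA : x ∈ A := by rw [hAeq, memN]; exact ⟨hx, hall x hx⟩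
      exact ((Finset.mem_filter.1 hxA).2 y hy hxy.symm).1 (hall y hy)
    · exfalso
      have hEc : E.card = 0 := by rw [hE, if_neg hall]; simp
      have hAeq : A = N := by
        refine Finset.eq_of_subset_of_card_le hAN ?_
        by_contra hlt
        push Not at hlt
        rcases Nat.lt_or_ge N.card 3 with h | h
        · interval_cases hh : N.card <;> omega
        · have := (pow_aux1 N.card h).1
          omega
      have hAdj : ∀ u ∈ N, ∀ x ∈ X, x ≠ u → (G.Adj v x ↔ G.Adj u x) := by
        intro u hu
        rw [← hAeq] at hu
        exact (Finset.mem_filter.1 hu).2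
      -- no edges between N and X \ N
      have hno : ∀ u ∈ N, ∀ x ∈ X, x ∉ N → ¬ D u x ∧ ¬ D x u := by
        intro u hu x hx hxN
        have hxu : x ≠ u := by rintro rfl; exact hxN hu
        have h1 := hAdj u hu x hx hxu
        have h2 : ¬ G.Adj v x := fun h => hxN ((memN x).2 ⟨hx, h⟩)
        have h3 := hD u x
        tauto
      obtain ⟨x0, hx0, ha⟩ := hnb
      have hx0N : x0 ∈ N := (memN x0).2 ⟨hx0, ha⟩
      push Not at hall
      obtain ⟨z, hz, hvz⟩ := hall
      have hzN : z ∉ N := fun h => hvz ((memN z).1 h).2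
      by_cases hone : ∃ y ∈ N, y ≠ x0
      · obtain ⟨y, hyN, hyx⟩ := hone
        have hM : DModuleOn D X (N : Set V) := by
          refine ⟨fun x hx => ((memN x).1 hx).1, ?_⟩
          rintro x ⟨hx, hxN⟩ s hs t ht
          have h1 := hno s hs x hx hxN
          have h2 := hno t ht x hx hxN
          tauto
        have := prime_mod hX hM (x := y) (y := x0) hyN hx0N hyx
        rw [← this] at hz
        exact hzN hz
      · push Not at hone
        refine no_unif hX hx0 fun x hx y hy hxx hyx => ?_
        have h1 := hno x0 hx0N x hx (fun h => hxx (hone x h))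
        have h2 := hno x0 hx0N y hy (fun h => hyx (hone y h))
        tauto


lemma conn_step {G : SimpleGraph V} (hG : G.Connected) {X : Set V} (hne : X.Nonempty)
    (hX : X ≠ Set.univ) : ∃ v ∉ X, ∃ x ∈ X, G.Adj v x := by
  obtain ⟨a, ha⟩ := hne
  obtain ⟨b, hb⟩ := (Set.ne_univ_iff_exists_notMem X).1 hX
  obtain ⟨p⟩ := hG.preconnected a b
  obtain ⟨d, -, h1, h2⟩ := p.exists_boundary_dart X ha hb
  exact ⟨d.snd, h2, d.fst, h1, d.adj.symm⟩

lemma exists_start [Fintype V] {G : SimpleGraph V} (hG : G.Connected)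
    (hcard : 3 ≤ Fintype.card V) :
    ∃ X : Set V, ∃ D, IsOrientation G D ∧ DPrimeOn D X := by
  have hu : (Set.univ : Set V).ncard = Fintype.card V := by
    rw [Set.ncard_univ, Nat.card_eq_fintype_card]
  obtain ⟨a⟩ := hG.nonempty
  obtain ⟨b, hb, x, hx, hbx⟩ := conn_step hG (X := {a}) ⟨a, rfl⟩ (by
    intro h
    rw [← h, Set.ncard_singleton] at hu
    omega)
  rw [Set.mem_singleton_iff] at hx
  subst hx
  obtain ⟨c, hc, y, hy, hcy⟩ := conn_step hG (X := {x, b}) ⟨x, Or.inl rfl⟩ (by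
    intro h
    have := (Set.ncard_insert_le x {b}).trans (by simp : _ ≤ 2)
    rw [h] at this
    omega)
  simp only [Set.mem_insert_iff, Set.mem_singleton_iff, not_or] at hc hy
  rcases hy with rfl | rfl
  · obtain ⟨D, h1, h2⟩ := prime_three hcy hbx.symm hc.2
    exact ⟨_, D, h1, h2⟩
  · obtain ⟨D, h1, h2⟩ := prime_three hcy hbx hc.1
    exact ⟨_, D, h1, h2⟩

lemma exists_max [Fintype V] {G : SimpleGraph V} (hG : G.Connected)
    (hcard : 3 ≤ Fintype.card V) :
    ∃ X : Set V, (∃ D, IsOrientation G D ∧ DPrimeOn D X) ∧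
      ∀ Y : Set V, (∃ D, IsOrientation G D ∧ DPrimeOn D Y) → Y.ncard ≤ X.ncard := by
  obtain ⟨X, hX⟩ := exists_start hG hcard
  exact Set.exists_max_image {X : Set V | ∃ D, IsOrientation G D ∧ DPrimeOn D X}
    Set.ncard (Set.toFinite _) ⟨X, hX⟩

/-- `K₄`-type obstruction. -/
lemma clique_case [Fintype V] {G : SimpleGraph V} (hG : G.Connected)
    (hK4 : ¬ Nonempty (G ≃g (⊤ : SimpleGraph (Fin 4))))
    {X : Set V} {D : V → V → Prop} (hD : IsOrientation G D) (hX : DPrimeOn D X)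
    (hmax : ∀ Y : Set V, (∃ D, IsOrientation G D ∧ DPrimeOn D Y) → Y.ncard ≤ X.ncard)
    {v : V} (hv : v ∉ X) (h3 : X.ncard = 3)
    (hcl : ∀ x ∈ X, G.Adj v x ∧ ∀ y ∈ X, x ≠ y → G.Adj x y) : False := by
  have hc4 : (insert v X).ncard = 4 := by
    rw [Set.ncard_insert_of_notMem hv (Set.toFinite _), h3]
  obtain ⟨a, b, c, hab, hac, hbc, hXe⟩ := Set.ncard_eq_three.1 h3
  have ha : a ∈ X := by simp [hXe]
  have hb : b ∈ X := by simp [hXe]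
  have hc : c ∈ X := by simp [hXe]
  -- no P₃ extended by a further vertex
  have hP3 : ∀ x y z t : V, G.Adj x y → G.Adj y z → x ≠ z → ¬ G.Adj x z → t ≠ x → t ≠ y → t ≠ z →
      G.Adj t y → G.Adj t z → False := by
    intro x y z t hxy hyz hxz hnxz htx hty htz hty' htz'
    obtain ⟨E, hE, hEp⟩ := prime_three hxy hyz hxz
    have ht : t ∉ ({x, y, z} : Set V) := by simp [htx, hty, htz]
    rcases ext_one hE hEp ht ⟨y, by simp, hty'⟩ with h | h | h
    · have h1 := hmax _ h
      rw [Set.ncard_insert_of_notMem ht (Set.toFinite _),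
        Set.ncard_eq_three.2 ⟨x, y, z, hxy.ne, hxz, hyz.ne, rfl⟩] at h1
      omega
    · exact hnxz ((h.2 x (by simp)).2 z (by simp) hxz)
    · have hs : {u | u ∈ ({x, y, z} : Set V) ∧ ∀ w ∈ ({x, y, z} : Set V),
          (G.Adj u w ↔ G.Adj t w)} ⊆ {x} := by
        rintro u ⟨rfl | rfl | rfl, h'⟩
        · rfl
        · exact absurd ((h' u (by simp)).2 hty') G.irrefl
        · exact absurd ((h' u (by simp)).2 htz') G.irrefl
      have h1 := Set.ncard_le_ncard hs (Set.toFinite _)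
      rw [Set.ncard_singleton] at h1
      have h2 : {w | w ∈ ({x, y, z} : Set V) ∧ G.Adj t w}.ncard ≠ 0 := by
        rw [← Nat.pos_iff_ne_zero, Set.ncard_pos (Set.toFinite _)]
        exact ⟨y, by simp, hty'⟩
      have h4 := Nat.lt_two_pow_self (n := {w | w ∈ ({x, y, z} : Set V) ∧ G.Adj t w}.ncard)
      omega
  by_cases huniv : insert v X = Set.univ
  · apply hK4
    have hcl' : ∀ x y : V, G.Adj x y ↔ x ≠ y := by
      intro x y
      refine ⟨fun h => h.ne, fun h => ?_⟩
      have hx : x ∈ insert v X := by rw [huniv]; trivial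
      have hy : y ∈ insert v X := by rw [huniv]; trivial
      rcases hx with rfl | hx <;> rcases hy with rfl | hy
      · exact absurd rfl h
      · exact (hcl y hy).1
      · exact (hcl x hx).1.symm
      · exact (hcl x hx).2 y hy h
    have hcV : Fintype.card V = 4 := by
      rw [← Nat.card_eq_fintype_card, ← Set.ncard_univ, ← huniv, hc4]
    have e : V ≃ Fin 4 := Fintype.equivFinOfCardEq hcV
    exact ⟨⟨e, by intro x y; simp [hcl']⟩⟩
  · obtain ⟨w, hw, x, hx, hwx⟩ := conn_step hG (X := insert v X) ⟨v, Or.inl rfl⟩ huniv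
    have hwv : w ≠ v := fun e => hw (Or.inl e)
    have hwX : w ∉ X := fun e => hw (Or.inr e)
    have hneX : ∀ y ∈ X, w ≠ y := fun y hy e => hwX (e ▸ hy)
    have hneX' : ∀ y ∈ X, v ≠ y := fun y hy e => hv (e ▸ hy)
    by_cases hnb : ∃ y ∈ X, G.Adj w y
    · rcases ext_one hD hX hwX hnb with h | h | h
      · have h1 := hmax _ h
        rw [Set.ncard_insert_of_notMem hwX (Set.toFinite _)] at h1
        omega
      · by_cases hvw : G.Adj v w
        · -- K₅
          set D1 := reorient G D v (fun _ => True) with hD1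
          have hO1 : IsOrientation G D1 := reorient_orient hD v _
          set D2 := reorient G D1 w (fun x => x ≠ c) with hD2
          have hO2 : IsOrientation G D2 := reorient_orient hO1 w _
          have hX2 : DPrimeOn D2 X := by
            refine prime_congr (fun x hx y hy => ?_) hX
            rw [hD2, reorient_of_ne hO1 _ (hneX x hx).symm (hneX y hy).symm, hD1,
              reorient_of_ne hD _ (hneX' x hx).symm (hneX' y hy).symm]
          have := ext_two_dom (v := v) (w := w) (b := b) (c := c) hX2 hb hc ?_ ?_ ?_ ?_ ?_ ?_
          · have h1 := hmax _ ⟨D2, hO2, this⟩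
            rw [Set.ncard_insert_of_notMem hw (Set.toFinite _), hc4] at h1
            omega
          · intro x hx
            rw [hD2, reorient_of_ne hO1 _ hwv.symm (hneX x hx).symm,
              reorient_of_ne hO1 _ (hneX x hx).symm hwv.symm, hD1, reorient_out, reorient_in]
            simp [(hcl x hx).1]
          · rw [hD2, reorient_out]
            exact ⟨hvw.symm, hneX' c hc⟩
          · rw [hD2, reorient_in]
            simp [hneX' c hc]
          · rw [hD2, reorient_out]
            exact ⟨(h.2 b hb).1, hbc⟩
          · rw [hD2, reorient_in]
            simp [(h.2 c hc).1]
          · rw [hD2, reorient_out]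
            simp
        · exact hP3 v a w b (hcl a ha).1 (h.2 a ha).1.symm hwv.symm hvw (hneX' b hb).symm hab.symm
            (hneX b hb).symm ((hcl b hb).2 a ha hab.symm) (h.2 b hb).1.symm
      · have h1 : {x | x ∈ X ∧ G.Adj w x}.ncard ≠ 0 := by
          rw [← Nat.pos_iff_ne_zero, Set.ncard_pos (Set.toFinite _)]
          exact hnb
        have h4 := Nat.lt_two_pow_self (n := {x | x ∈ X ∧ G.Adj w x}.ncard)
        have h5 : 1 < {u | u ∈ X ∧ ∀ y ∈ X, (G.Adj u y ↔ G.Adj w y)}.ncard := by omega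
        obtain ⟨s, hs, t, ht, hst⟩ := (Set.one_lt_ncard (Set.toFinite _)).1 h5
        have h6 := (hcl s hs.1).2 t ht.1 hst
        have h7 := (ht.2 t ht.1).2 ((hs.2 t ht.1).1 h6)
        exact G.irrefl h7
    · push Not at hnb
      have hwv' : G.Adj w v := by
        rcases hx with rfl | hx
        · exact hwx
        · exact absurd hwx (hnb x hx)
      exact hP3 w v a b hwv' (hcl a ha).1 (hneX a ha) (hnb a ha) (hneX b hb).symm
        (hneX' b hb).symm hab.symm (hcl b hb).1.symm ((hcl b hb).2 a ha hab.symm)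

/-- A copy orientation. -/
lemma reorient_copy {G : SimpleGraph V} {D : V → V → Prop} (hD : IsOrientation G D) {X : Set V}
    {u b : V} (hadj : ∀ x ∈ X, (G.Adj b x ↔ G.Adj u x)) :
    ∀ x ∈ X, (reorient G D u (D b) u x ↔ D b x) ∧ (reorient G D u (D b) x u ↔ D x b) := by
  intro x hx
  rw [reorient_out, reorient_in]
  have h1 := hD b x
  have h2 := hadj x hx
  tauto

lemma suff [Fintype V] {G : SimpleGraph V} (hcard : 3 ≤ Fintype.card V)
    (hK4 : ¬ Nonempty (G ≃g (⊤ : SimpleGraph (Fin 4)))) (hG : G.Connected)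
    (hS : ∀ S : Set V, StableModule G S → S.ncard ≤ 2 ^ (modNbhd G S).ncard) :
    PrimarilyOrientable G := by
  obtain ⟨X, ⟨D, hD, hX⟩, hmax⟩ := exists_max hG hcard
  by_cases huniv : X = Set.univ
  · subst huniv
    refine ⟨D, hD, hcard, fun M hM => hX.2 M ⟨Set.subset_univ _, fun v hv => hM v hv.2⟩⟩
  exfalso
  have hXne : X.Nonempty := by
    rw [← Set.ncard_pos (Set.toFinite _)]
    have := hX.1
    omega
  -- every outside vertex with a neighbour in `X` has many twins
  have hFT : ∀ v ∉ X, (∃ x ∈ X, G.Adj v x) → 2 ^ {x | x ∈ X ∧ G.Adj v x}.ncard ≤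
      {u | u ∈ X ∧ ∀ y ∈ X, (G.Adj u y ↔ G.Adj v y)}.ncard := by
    intro v hv hnb
    rcases ext_one hD hX hv hnb with h | h | h
    · have h1 := hmax _ h
      rw [Set.ncard_insert_of_notMem hv (Set.toFinite _)] at h1
      omega
    · exact (clique_case hG hK4 hD hX hmax hv h.1 h.2).elim
    · exact h
  have hFT2 : ∀ v ∉ X, (∃ x ∈ X, G.Adj v x) →
      1 < {u | u ∈ X ∧ ∀ y ∈ X, (G.Adj u y ↔ G.Adj v y)}.ncard := by
    intro v hv hnb
    have h := hFT v hv hnb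
    have h1 : {x | x ∈ X ∧ G.Adj v x}.ncard ≠ 0 := by
      rw [← Nat.pos_iff_ne_zero, Set.ncard_pos (Set.toFinite _)]
      exact hnb
    have h4 := Nat.lt_two_pow_self (n := {x | x ∈ X ∧ G.Adj v x}.ncard)
    omega
  -- two-vertex extensions are impossible
  have hT2 : ∀ u w b c, u ∉ X → w ∉ X → b ∈ X → c ∈ X → b ≠ c →
      (∀ x ∈ X, (G.Adj b x ↔ G.Adj u x)) → (∀ x ∈ X, (G.Adj c x ↔ G.Adj w x)) →
      ¬ (G.Adj w u ↔ G.Adj w b) → u ≠ w → False := by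
    intro u w b c hu hw hb hc hbc hub hwc hne huw
    have hneu : ∀ x ∈ X, x ≠ u := fun x hx e => hu (e ▸ hx)
    have hnew : ∀ x ∈ X, x ≠ w := fun x hx e => hw (e ▸ hx)
    set D1 := reorient G D u (D b) with hD1
    have hO1 : IsOrientation G D1 := reorient_orient hD u _
    set D2 := reorient G D1 w (D1 c) with hD2
    have hO2 : IsOrientation G D2 := reorient_orient hO1 w _
    have e1 : ∀ x ∈ X, ∀ y ∈ X, (D1 x y ↔ D x y) := fun x hx y hy =>
      reorient_of_ne hD _ (hneu x hx) (hneu y hy)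
    have e2 : ∀ x ∈ X, ∀ y ∈ X, (D2 x y ↔ D1 x y) := fun x hx y hy =>
      reorient_of_ne hO1 _ (hnew x hx) (hnew y hy)
    have hX2 : DPrimeOn D2 X := prime_congr e2 (prime_congr e1 hX)
    have c1 := reorient_copy hD hub
    have c2 := reorient_copy hO1 hwc
    rw [← hD1] at c1
    rw [← hD2] at c2
    have := ext_two_twins (u := u) (w := w) hX2 hb hc hbc ?_ ?_ ?_
    · have h1 := hmax _ ⟨D2, hO2, this⟩
      rw [Set.ncard_insert_of_notMem (by simp [hw, huw.symm]) (Set.toFinite _),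
        Set.ncard_insert_of_notMem hu (Set.toFinite _)] at h1
      omega
    · intro x hx
      rw [e2 b hb x hx, e2 x hx b hb, e1 b hb x hx, e1 x hx b hb, hD2,
        reorient_of_ne hO1 _ huw (hnew x hx), reorient_of_ne hO1 _ (hnew x hx) huw]
      exact c1 x hx
    · intro x hx
      rw [e2 c hc x hx, e2 x hx c hc]
      exact c2 x hx
    · rw [(hO2 w u).1, (hO2 w b).1]
      exact hne
  have hT3 : ∀ u w b, u ∉ X → w ∉ X → b ∈ X →
      (∀ x ∈ X, (G.Adj b x ↔ G.Adj u x)) → (∀ x ∈ X, ¬ G.Adj w x) →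
      G.Adj w u → False := by
    intro u w b hu hw hb hub hwx hwu
    have hneu : ∀ x ∈ X, x ≠ u := fun x hx e => hu (e ▸ hx)
    set D1 := reorient G D u (D b) with hD1
    have hO1 : IsOrientation G D1 := reorient_orient hD u _
    have e1 : ∀ x ∈ X, ∀ y ∈ X, (D1 x y ↔ D x y) := fun x hx y hy =>
      reorient_of_ne hD _ (hneu x hx) (hneu y hy)
    have hX1 : DPrimeOn D1 X := prime_congr e1 hX
    have c1 := reorient_copy hD hub
    rw [← hD1] at c1
    have := ext_two_pendant (u := u) (w := w) hX1 hb ?_ ?_ ?_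
    · have h1 := hmax _ ⟨D1, hO1, this⟩
      rw [Set.ncard_insert_of_notMem (by simp [hw, hwu.ne]) (Set.toFinite _),
        Set.ncard_insert_of_notMem hu (Set.toFinite _)] at h1
      omega
    · intro x hx
      rw [e1 b hb x hx, e1 x hx b hb]
      exact c1 x hx
    · intro x hx
      have h1 := hwx x hx
      rw [← (hO1 w x).1] at h1
      tauto
    · rw [(hO1 w u).1]
      exact hwu
  obtain ⟨v, hv, hnb⟩ := conn_step hG hXne huniv
  set B : Set V := {u | u ∈ X ∧ ∀ y ∈ X, (G.Adj u y ↔ G.Adj v y)} with hB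
  set S : Set V := {u | ∀ y ∈ X, (G.Adj u y ↔ G.Adj v y)} with hSdef
  have hvS : v ∈ S := fun y _ => Iff.rfl
  have hBS : B ⊆ S := fun x hx => hx.2
  have hB1 : 1 < B.ncard := hFT2 v hv hnb
  obtain ⟨b, hb, c, hc, hbc⟩ := (Set.one_lt_ncard (Set.toFinite _)).1 hB1
  -- stability
  have hvB : ∀ u ∈ S, u ∈ X → ¬ G.Adj v u := by
    intro u hu huX h
    exact G.irrefl ((hu u huX).2 h)
  have hstab : ∀ x ∈ S, ∀ y ∈ S, ¬ G.Adj x y := by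
    intro x hx y hy hxy
    have hxX : x ∉ X := fun hxX => hvB x hx hxX ((hy x hxX).1 hxy.symm)
    have hyX : y ∉ X := fun hyX => hvB y hy hyX ((hx y hyX).1 hxy)
    refine hT2 x y b c hxX hyX hb.1 hc.1 hbc (fun z hz => ?_) (fun z hz => ?_) ?_ hxy.ne
    · rw [hb.2 z hz, hx z hz]
    · rw [hc.2 z hz, hy z hz]
    · have h1 : ¬ G.Adj y b := fun h => hvB b (hBS hb) hb.1 ((hy b hb.1).1 h)
      have h2 := hxy.symm
      tauto
  -- twins of outside vertices do not distinguish `B`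
  have hconst : ∀ w ∉ X, ∀ s ∈ B, ∀ t ∈ B, (G.Adj w s ↔ G.Adj w t) := by
    intro w hw s hs t ht
    by_cases hwn : ∃ x ∈ X, G.Adj w x
    · have h1 := hFT2 w hw hwn
      obtain ⟨b', hb', -, -, -⟩ := (Set.one_lt_ncard (Set.toFinite _)).1 h1
      rw [← hb'.2 s hs.1, ← hb'.2 t ht.1, G.adj_comm b' s, G.adj_comm b' t, hs.2 b' hb'.1,
        ht.2 b' hb'.1]
    · push Not at hwn
      have h1 := hwn s hs.1
      have h2 := hwn t ht.1
      tauto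
  have hmodb : ∀ w ∉ S, ∀ u ∈ S, (G.Adj w u ↔ G.Adj w b) := by
    intro w hw u hu
    by_cases hwX : w ∈ X
    · rw [G.adj_comm w u, G.adj_comm w b, hu w hwX, hb.2 w hwX]
    by_cases huX : u ∈ X
    · exact hconst w hwX u ⟨huX, hu⟩ b hb
    by_contra hne
    have huw : u ≠ w := by rintro rfl; exact hw hu
    by_cases hwn : ∃ x ∈ X, G.Adj w x
    · have h1 := hFT2 w hwX hwn
      obtain ⟨b', hb', -, -, -⟩ := (Set.one_lt_ncard (Set.toFinite _)).1 h1
      refine hT2 u w b b' huX hwX hb.1 hb'.1 ?_ (fun z hz => ?_) hb'.2 hne huw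
      · rintro rfl
        exact hw fun y hy => by rw [← hb'.2 y hy, hb.2 y hy]
      · rw [hb.2 z hz, hu z hz]
    · push Not at hwn
      refine hT3 u w b huX hwX hb.1 (fun z hz => ?_) hwn ?_
      · rw [hb.2 z hz, hu z hz]
      · have h1 := hwn b hb.1
        tauto
  have hSn : B.ncard + 1 ≤ S.ncard := by
    have hsub : insert v B ⊆ S := by
      rintro x (rfl | hx)
      · exact hvS
      · exact hBS hx
    have h1 := Set.ncard_le_ncard hsub (Set.toFinite _)
    rwa [Set.ncard_insert_of_notMem (fun h => hv h.1) (Set.toFinite _)] at h1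
  have hSM : StableModule G S := by
    refine ⟨fun w hw => ?_, by omega, hstab⟩
    by_cases h : G.Adj w b
    · exact Or.inl fun x hx => (hmodb w hw x hx).2 h
    · exact Or.inr fun x hx h' => h ((hmodb w hw x hx).1 h')
  have h1 := hS S hSM
  have h2 : 2 ^ {x | x ∈ X ∧ G.Adj v x}.ncard ≤ B.ncard := hFT v hv hnb
  have hex : ∃ w ∈ modNbhd G S, w ∉ X := by
    by_contra! hcon
    have hsub : modNbhd G S ⊆ {x | x ∈ X ∧ G.Adj v x} := by
      rintro w ⟨hwS, s, hs, hws⟩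
      have hwX := hcon w ⟨hwS, s, hs, hws⟩
      exact ⟨hwX, (hs w hwX).1 hws.symm⟩
    have h3 := Set.ncard_le_ncard hsub (Set.toFinite _)
    have h4 := Nat.pow_le_pow_right (n := 2) (by norm_num) h3
    omega
  obtain ⟨w, ⟨hwS, s, hs, hws⟩, hwX⟩ := hex
  have hwb : G.Adj w b := (hmodb w hwS s hs).1 hws
  have h3 := hFT w hwX ⟨b, hb.1, hwb⟩
  have h4 : B ⊆ {x | x ∈ X ∧ G.Adj w x} := fun x hx => ⟨hx.1, (hmodb w hwS x (hBS hx)).2 hwb⟩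
  have h5 : {u | u ∈ X ∧ ∀ y ∈ X, (G.Adj u y ↔ G.Adj w y)} ⊆ {x | x ∈ X ∧ G.Adj v x} := by
    intro x hx
    have := (hx.2 b hb.1).2 hwb
    exact ⟨hx.1, (hb.2 x hx.1).1 this.symm⟩
  have h6 := Set.ncard_le_ncard h4 (Set.toFinite _)
  have h7 := Set.ncard_le_ncard h5 (Set.toFinite _)
  have h8 := Nat.lt_two_pow_self (n := {x | x ∈ X ∧ G.Adj v x}.ncard)
  have h9 := Nat.lt_two_pow_self (n := {x | x ∈ X ∧ G.Adj w x}.ncard)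
  omega

lemma nec [Fintype V] {G : SimpleGraph V} (hcard : 3 ≤ Fintype.card V)
    (h : PrimarilyOrientable G) :
    G.Connected ∧ ∀ S : Set V, StableModule G S → S.ncard ≤ 2 ^ (modNbhd G S).ncard := by
  classical
  obtain ⟨D, hD, -, hP⟩ := h
  have hu : (Set.univ : Set V).ncard = Fintype.card V := by
    rw [Set.ncard_univ, Nat.card_eq_fintype_card]
  have hPX : DPrimeOn D Set.univ :=
    ⟨by omega, fun M hM => hP M fun v hv => hM.2 v ⟨trivial, hv⟩⟩
  have hmod : ∀ C : Set V, (∀ x ∈ C, ∀ y ∉ C, ¬ G.Adj x y) → DigraphModule D C := by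
    intro C hC v hv x hx y hy
    have h1 := hC x hx v hv
    have h2 := hC y hy v hv
    rw [← (hD x v).1] at h1
    rw [← (hD y v).1] at h2
    tauto
  refine ⟨?_, fun S hS => ?_⟩
  · have hne : Nonempty V := Fintype.card_pos_iff.1 (by omega)
    refine ⟨fun a b => ?_⟩
    rcases hP {x | G.Reachable a x}
      (hmod _ fun x hx y hy hxy => hy (SimpleGraph.Reachable.trans hx hxy.reachable)) with h | h
    · exfalso
      have hiso : ∀ x, ¬ G.Adj a x := fun x hx =>
        hx.ne (h (SimpleGraph.Reachable.refl a) hx.reachable)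
      refine no_unif hPX (c := a) trivial fun x _ y _ _ _ => ?_
      have h1 := hiso x
      have h2 := hiso y
      rw [← (hD a x).1] at h1
      rw [← (hD a y).1] at h2
      tauto
    · have : b ∈ {x | G.Reachable a x} := by rw [h]; trivial
      exact this
  · by_contra hlt
    push Not at hlt
    set N : Finset V := (modNbhd G S).toFinset with hN
    have hNc : (modNbhd G S).ncard = N.card := Set.ncard_eq_toFinset_card' _
    have hSc : S.ncard = S.toFinset.card := Set.ncard_eq_toFinset_card' _
    rw [hNc, hSc, ← Finset.card_powerset] at hlt
    obtain ⟨x, hx, y, hy, hxy, he⟩ := Finset.exists_ne_map_eq_of_card_lt_of_maps_to hlt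
      (f := fun x => N.filter (fun v => D v x)) (fun x _ => by
        exact Finset.mem_coe.2 (Finset.mem_powerset.2 (Finset.filter_subset _ _)))
    rw [Set.mem_toFinset] at hx hy
    refine no_pair hPX (b := x) (c := y) trivial trivial hxy fun z _ hzx hzy => ?_
    have hx' := hD z x
    have hy' := hD z y
    by_cases hzS : z ∈ S
    · have h1 := hS.2.2 z hzS x hx
      have h2 := hS.2.2 z hzS y hy
      grind only
    · rcases hS.1 z hzS with h | h
      · have hzN : z ∈ N := by
          rw [hN, Set.mem_toFinset]
          exact ⟨hzS, x, hx, h x hx⟩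
        have h0 : D z x ↔ D z y := by
          have := Finset.ext_iff.1 he z
          simpa [hzN] using this
        have h1 := h x hx
        have h2 := h y hy
        grind only
      · have h1 := h x hx
        have h2 := h y hy
        grind only


/-- Theorem 1 (main theorem): a graph with at least three vertices, other than `K₄`,
is primarily orientable iff it is connected and every stable module `S` satisfies
`2 ^ d_G(S) ≥ |S|`. -/
theorem primarily_orientable_iff [Fintype V] (G : SimpleGraph V)
    (hcard : 3 ≤ Fintype.card V)
    (hK4 : ¬ Nonempty (G ≃g (⊤ : SimpleGraph (Fin 4)))) :
    PrimarilyOrientable G ↔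
      G.Connected ∧
        ∀ S : Set V, StableModule G S → S.ncard ≤ 2 ^ (modNbhd G S).ncard := by
  exact ⟨nec hcard, fun h => suff hcard hK4 h.1 h.2⟩
end

section
/- Let G be a finite simple graph with at least three vertices that is not isomorphic to the complete graph K_4. If G is connected and sduo-free (has no s-duo), then G is primarily orientable, i.e., G admits a prime orientation. -/
variable {V : Type*}

open Classical in
/-- The subgraph induced on `X` has a prime orientation. -/
def GoodOn (G : SimpleGraph V) (X : Finset V) : Prop :=
  3 ≤ X.card ∧ ∃ D : V → V → Prop,
    (∀ x ∈ X, ∀ y ∈ X, ((D x y ∨ D y x) ↔ G.Adj x y) ∧ ¬ (D x y ∧ D y x)) ∧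
    ∀ M : Finset V, M ⊆ X →
      (∀ v ∈ X, v ∉ M → ∀ x ∈ M, ∀ y ∈ M, (D v x ↔ D v y) ∧ (D x v ↔ D y v)) →
      M.card ≤ 1 ∨ M = X

open Classical in
theorem goodOn_of_fin {k : ℕ} (hk : 3 ≤ k) (G : SimpleGraph V) (f : Fin k ↪ V)
    (E : Fin k → Fin k → Bool)
    (hE : ∀ i j, ((E i j = true ∨ E j i = true) ↔ G.Adj (f i) (f j)) ∧
      ¬ (E i j = true ∧ E j i = true))
    (hp : ∀ M : Finset (Fin k),
      (∀ v, v ∉ M → ∀ x ∈ M, ∀ y ∈ M, E v x = E v y ∧ E x v = E y v) →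
      M.card ≤ 1 ∨ M = Finset.univ) :
    GoodOn G (Finset.univ.map f) := by
  refine ⟨by simpa using hk, fun x y => ∃ i j, f i = x ∧ f j = y ∧ E i j = true, ?_, ?_⟩
  · have key : ∀ i j, (∃ i' j', f i' = f i ∧ f j' = f j ∧ E i' j' = true) ↔ E i j = true := by
      intro i j
      simp
    intro x hx y hy
    simp only [Finset.mem_map, Finset.mem_univ, true_and] at hx hy
    obtain ⟨i, rfl⟩ := hx
    obtain ⟨j, rfl⟩ := hy
    simp only [key]
    exact hE i j
  · intro M hM hmod
    have key : ∀ i j, (∃ i' j', f i' = f i ∧ f j' = f j ∧ E i' j' = true) ↔ E i j = true := by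
      intro i j
      simp
    have hMe : M = (Finset.univ.filter (fun i => f i ∈ M)).map f := by
      ext x
      simp only [Finset.mem_map, Finset.mem_filter, Finset.mem_univ, true_and]
      constructor
      · intro hx
        obtain ⟨i, -, rfl⟩ := Finset.mem_map.1 (hM hx)
        exact ⟨i, hx, rfl⟩
      · rintro ⟨i, hi, rfl⟩
        exact hi
    have h := hp (Finset.univ.filter (fun i => f i ∈ M)) (by
      intro v hv x hx y hy
      simp only [Finset.mem_filter, Finset.mem_univ, true_and] at hv hx hy
      have := hmod (f v) (by simp) hv (f x) hx (f y) hy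
      simp only [key] at this
      exact ⟨Bool.eq_iff_iff.2 this.1, Bool.eq_iff_iff.2 this.2⟩)
    rcases h with h | h
    · left
      rw [hMe, Finset.card_map]
      exact h
    · right
      rw [hMe, h]

open Classical in
theorem goodOn_path (G : SimpleGraph V) {a b c : V} (hab : G.Adj a b) (hbc : G.Adj b c)
    (hac : a ≠ c) (hn : ¬ G.Adj a c) : GoodOn G {a, b, c} := by
  have h1 := hab.ne
  have h2 := hbc.ne
  have h := goodOn_of_fin (k := 3) le_rfl G
    ⟨![a, b, c], by
      intro i j hij
      fin_cases i <;> fin_cases j <;> simp_all⟩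
    (fun i j => (i.val + 1 == j.val)) (by
      intro i j
      change (_ ↔ G.Adj (![a, b, c] i) (![a, b, c] j)) ∧ _
      fin_cases i <;> fin_cases j <;> simp_all [G.adj_comm]) (by decide)
  convert h using 1
  ext x
  simp only [Finset.mem_map, Finset.mem_univ, true_and]
  change _ ↔ ∃ i, ![a, b, c] i = x
  simp [Fin.exists_fin_succ, eq_comm]

open Classical in
theorem goodOn_triangle (G : SimpleGraph V) {a b c : V} (hab : G.Adj a b) (hbc : G.Adj b c)
    (hac : G.Adj a c) : GoodOn G {a, b, c} := by
  have h1 := hab.ne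
  have h2 := hbc.ne
  have h3 := hac.ne
  have h := goodOn_of_fin (k := 3) le_rfl G
    ⟨![a, b, c], by
      intro i j hij
      fin_cases i <;> fin_cases j <;> simp_all⟩
    (fun i j => (i + 1 == j)) (by
      intro i j
      change (_ ↔ G.Adj (![a, b, c] i) (![a, b, c] j)) ∧ _
      fin_cases i <;> fin_cases j <;> simp_all [G.adj_comm]) (by decide)
  convert h using 1
  ext x
  simp only [Finset.mem_map, Finset.mem_univ, true_and]
  change _ ↔ ∃ i, ![a, b, c] i = x
  simp [Fin.exists_fin_succ, eq_comm]

open Classical in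
theorem goodOn_five (G : SimpleGraph V) (K : Finset V) (hK : K.card = 5)
    (hc : ∀ x ∈ K, ∀ y ∈ K, x ≠ y → G.Adj x y) : GoodOn G K := by
  let e := (K.equivFinOfCardEq hK).symm
  have h := goodOn_of_fin (k := 5) (by norm_num) G
    (e.toEmbedding.trans (Function.Embedding.subtype _))
    (fun i j => (i + 1 == j) || (i + 2 == j)) (by
      intro i j
      have h1 : G.Adj (e i : V) (e j : V) ↔ i ≠ j := by
        constructor
        · rintro h rfl
          exact h.ne rfl
        · intro hij
          exact hc _ (e i).2 _ (e j).2 (fun h => hij (e.injective (Subtype.ext h)))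
      change (_ ↔ G.Adj (e i : V) (e j : V)) ∧ _
      rw [h1]
      clear h1
      revert i j
      decide) (by decide)
  convert h using 1
  ext x
  simp only [Finset.mem_map, Finset.mem_univ, true_and]
  constructor
  · intro hx
    exact ⟨e.symm ⟨x, hx⟩, by simp⟩
  · rintro ⟨i, rfl⟩
    exact (e i).2

open Classical in
theorem goodOn_perm (G : SimpleGraph V) (X : Finset V) (σ : Equiv.Perm V)
    (hσ : ∀ x ∈ X, ∀ y ∈ X, G.Adj (σ x) (σ y) ↔ G.Adj x y) (h : GoodOn G X) :
    GoodOn G (X.map σ.toEmbedding) := by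
  obtain ⟨h3, D, hD, hp⟩ := h
  refine ⟨by simpa using h3, fun x y => D (σ.symm x) (σ.symm y), ?_, ?_⟩
  · intro x hx y hy
    rw [Finset.mem_map_equiv] at hx hy
    have := hσ _ hx _ hy
    simp only [Equiv.apply_symm_apply] at this
    rw [this]
    exact hD _ hx _ hy
  · intro M hM hmod
    have := hp (M.map σ.symm.toEmbedding) (by
      intro x hx
      rw [Finset.mem_map_equiv] at hx
      have := hM hx
      rw [Finset.mem_map_equiv] at this
      simpa using this) (by
      intro v hv hvM x hx y hy
      rw [Finset.mem_map_equiv] at hvM hx hy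
      have := hmod (σ v) (by rw [Finset.mem_map_equiv]; simpa using hv) hvM _ hx _ hy
      simpa using this)
    rcases this with h | h
    · left
      simpa using h
    · right
      rw [← h]
      ext x
      simp [Finset.mem_map_equiv]

open Classical in
/-- Adding `v` to `X` with out-neighbourhood `A`. -/
theorem goodOn_insert (G : SimpleGraph V) (X : Finset V) (v : V) (hv : v ∉ X)
    (D : V → V → Prop) (h3 : 3 ≤ X.card)
    (hD : ∀ x ∈ X, ∀ y ∈ X, ((D x y ∨ D y x) ↔ G.Adj x y) ∧ ¬ (D x y ∧ D y x))
    (hp : ∀ M : Finset V, M ⊆ X →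
      (∀ v ∈ X, v ∉ M → ∀ x ∈ M, ∀ y ∈ M, (D v x ↔ D v y) ∧ (D x v ↔ D y v)) →
      M.card ≤ 1 ∨ M = X)
    (A : Finset V) (hA : A ⊆ X.filter (G.Adj v))
    (hne : ∃ x ∈ X, G.Adj v x)
    (hfull : (∀ x ∈ X, G.Adj v x) → A ≠ ∅ ∧ A ≠ X)
    (htw : ∀ u ∈ X, (∀ x ∈ X, x ≠ u → (G.Adj v x ↔ G.Adj u x)) →
      A ≠ X.filter (D u) ∧ (G.Adj v u → A ≠ insert u (X.filter (D u)))) :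
    GoodOn G (insert v X) := by
  have hnv : ∀ x ∈ X, x ≠ v := fun x hx h => hv (h ▸ hx)
  have hAX : ∀ x ∈ A, x ∈ X ∧ G.Adj v x := fun x hx => by simpa using hA hx
  let D' : V → V → Prop := fun x y =>
    if x = v then y ∈ A else if y = v then G.Adj v x ∧ x ∉ A else D x y
  have e1 : ∀ y, D' v y ↔ y ∈ A := fun y => by simp [D']
  have e2 : ∀ x ∈ X, (D' x v ↔ G.Adj v x ∧ x ∉ A) := fun x hx => by simp [D', hnv x hx]
  have e3 : ∀ x ∈ X, ∀ y ∈ X, (D' x y ↔ D x y) := fun x hx y hy => by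
    simp [D', hnv x hx, hnv y hy]
  refine ⟨?_, D', ?_, ?_⟩
  · rw [Finset.card_insert_of_notMem hv]
    omega
  · intro x hx y hy
    rw [Finset.mem_insert] at hx hy
    rcases hx with rfl | hx <;> rcases hy with rfl | hy
    · have : y ∉ A := fun h => hv (hAX _ h).1
      simp [e1, this]
    · rw [e1, e2 y hy]
      have := hAX y
      tauto
    · rw [e1, e2 x hx, G.adj_comm x]
      have := hAX x
      tauto
    · rw [e3 x hx y hy, e3 y hy x hx]
      exact hD x hx y hy
  · intro M hM hmod
    have hsub : M.erase v ⊆ X := by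
      intro x hx
      have h := hM (Finset.mem_of_mem_erase hx)
      have h' := Finset.ne_of_mem_erase hx
      simpa [h'] using h
    have := hp (M.erase v) hsub (by
      intro w hw hwM x hx y hy
      have h1 := hmod w (Finset.mem_insert_of_mem hw)
        (fun h => hwM (Finset.mem_erase.2 ⟨hnv w hw, h⟩))
        x (Finset.mem_of_mem_erase hx) y (Finset.mem_of_mem_erase hy)
      have hx := hsub hx
      have hy := hsub hy
      rwa [e3 w hw x hx, e3 w hw y hy, e3 x hx w hw, e3 y hy w hw] at h1)
    by_cases hvM : v ∈ M
    · rcases this with h | h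
      · by_cases hM1 : M.card ≤ 1
        · exact Or.inl hM1
        exfalso
        push Not at hM1
        obtain ⟨u, huM, huv⟩ := Finset.exists_mem_ne hM1 v
        have hu : u ∈ M.erase v := Finset.mem_erase.2 ⟨huv, huM⟩
        have huX := hsub hu
        have hout : ∀ x ∈ X, x ≠ u → x ∉ M := by
          intro x hx hxu hxM
          have hx' : x ∈ M.erase v := Finset.mem_erase.2 ⟨hnv x hx, hxM⟩
          exact hxu (Finset.card_le_one_iff.1 h hx' hu)
        have hrel : ∀ x ∈ X, x ≠ u → ((x ∈ A ↔ D u x) ∧ ((G.Adj v x ∧ x ∉ A) ↔ D x u)) := by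
          intro x hx hxu
          have h1 := hmod x (Finset.mem_insert_of_mem hx) (hout x hx hxu) v hvM u huM
          rw [e1, e2 x hx, e3 x hx u huX, e3 u huX x hx] at h1
          exact ⟨h1.2, h1.1⟩
        have htw' := htw u huX (by
          intro x hx hxu
          have h1 := hrel x hx hxu
          have h2 := hAX x
          have h3 := (hD u huX x hx).1
          rw [← h3, ← h1.1, ← h1.2]
          by_cases hxA : x ∈ A
          · simp [hxA, (h2 hxA).2]
          · simp [hxA])
        have hDu : ¬ D u u := fun h => (hD u huX u huX).2 ⟨h, h⟩
        by_cases huA : u ∈ A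
        · refine htw'.2 (hAX u huA).2 ?_
          ext x
          rw [Finset.mem_insert, Finset.mem_filter]
          by_cases hxu : x = u
          · exact ⟨fun _ => Or.inl hxu, fun _ => hxu ▸ huA⟩
          · constructor
            · intro hxA
              exact Or.inr ⟨(hAX x hxA).1, (hrel x (hAX x hxA).1 hxu).1.1 hxA⟩
            · rintro (h1 | ⟨hx, h1⟩)
              · exact absurd h1 hxu
              · exact (hrel x hx hxu).1.2 h1
        · refine htw'.1 ?_
          ext x
          rw [Finset.mem_filter]
          by_cases hxu : x = u
          · exact ⟨fun h => absurd (hxu ▸ h) huA, fun h => absurd (hxu ▸ h.2 : D u u) hDu⟩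
          · constructor
            · intro hxA
              exact ⟨(hAX x hxA).1, (hrel x (hAX x hxA).1 hxu).1.1 hxA⟩
            · rintro ⟨hx, h1⟩
              exact (hrel x hx hxu).1.2 h1
      · right
        rw [← Finset.insert_erase hvM, h]
    · rw [Finset.erase_eq_of_notMem hvM] at this
      rcases this with h | h
      · exact Or.inl h
      exfalso
      subst h
      have hu := hmod v (Finset.mem_insert_self _ _) hvM
      obtain ⟨x0, hx0, hvx0⟩ := hne
      have hall : ∀ x ∈ M, (x ∈ A ↔ x0 ∈ A) ∧ G.Adj v x := by
        intro x hx
        have h1 := hu x hx x0 hx0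
        rw [e1, e1, e2 x hx, e2 x0 hx0] at h1
        have h2 := hAX x
        tauto
      have hf := hfull (fun x hx => (hall x hx).2)
      by_cases h0 : x0 ∈ A
      · refine hf.2 ?_
        ext x
        exact ⟨fun h => (hAX x h).1, fun h => (hall x h).1.2 h0⟩
      · refine hf.1 (Finset.eq_empty_of_forall_notMem ?_)
        intro x hxA
        exact h0 ((hall x (hAX x hxA).1).1.1 hxA)

theorem two_mul_lt_two_pow {d : ℕ} (hd : 3 ≤ d) : 2 * d < 2 ^ d := by
  induction d, hd using Nat.le_induction with
  | base => norm_num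
  | succ n hn ih =>
    rw [pow_succ]
    omega

open Classical in
/-- One-vertex extension by counting. -/
theorem goodOn_extend (G : SimpleGraph V) (X : Finset V) (v : V) (hv : v ∉ X)
    (h : GoodOn G X) (hne : ∃ x ∈ X, G.Adj v x)
    (hK : ¬ (X.card = 3 ∧ (∀ x ∈ X, G.Adj v x) ∧ ∀ x ∈ X, ∀ y ∈ X, x ≠ y → G.Adj x y))
    (hF : ∀ u ∈ X, ∀ w ∈ X, ¬ G.Adj v u → ¬ G.Adj v w →
      (∀ x ∈ X, (G.Adj v x ↔ G.Adj u x)) → (∀ x ∈ X, (G.Adj v x ↔ G.Adj w x)) → u = w) :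
    GoodOn G (insert v X) := by
  obtain ⟨h3, D, hD, hp⟩ := h
  set N := X.filter (G.Adj v) with hN
  have hNX : N ⊆ X := Finset.filter_subset _ _
  have hNne : N.Nonempty := by
    obtain ⟨x, hx, hvx⟩ := hne
    exact ⟨x, Finset.mem_filter.2 ⟨hx, hvx⟩⟩
  have hd1 : 1 ≤ N.card := hNne.card_pos
  have hadj : ∀ x ∈ X, ∀ y ∈ X, ¬ G.Adj x y → ¬ D x y ∧ ¬ D y x := by
    intro x hx y hy hxy
    have := (hD x hx y hy).1
    tauto
  -- it suffices to find a small set containing all bad choices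
  suffices hB : ∃ B : Finset (Finset V), B.card < 2 ^ N.card ∧
      ((∀ x ∈ X, G.Adj v x) → ∅ ∈ B ∧ X ∈ B) ∧
      (∀ u ∈ X, (∀ x ∈ X, x ≠ u → (G.Adj v x ↔ G.Adj u x)) →
        X.filter (D u) ∈ B ∧ (G.Adj v u → insert u (X.filter (D u)) ∈ B)) by
    obtain ⟨B, hBc, hB1, hB2⟩ := hB
    rw [← Finset.card_powerset] at hBc
    obtain ⟨A, hA, hAB⟩ := Finset.exists_mem_notMem_of_card_lt_card hBc
    rw [Finset.mem_powerset] at hA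
    refine goodOn_insert G X v hv D h3 hD hp A hA hne ?_ ?_
    · intro hf
      have := hB1 hf
      constructor <;> rintro rfl <;> tauto
    · intro u hu htw
      have := hB2 u hu htw
      constructor
      · rintro rfl
        tauto
      · rintro hvu rfl
        tauto
  by_cases hex : ∃ u ∈ X, ¬ G.Adj v u ∧ ∀ x ∈ X, (G.Adj v x ↔ G.Adj u x)
  · obtain ⟨u, hu, hvu, hut⟩ := hex
    refine ⟨{X.filter (D u)}, ?_, ?_, ?_⟩
    · rw [Finset.card_singleton]
      exact Nat.one_lt_two_pow (by omega)
    · intro hf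
      exact absurd (hf u hu) hvu
    · intro w hw hwt
      have hvw : ¬ G.Adj v w := by
        intro hvw
        by_cases huw : u = w
        · exact hvu (huw ▸ hvw)
        · have h1 := (hut w hw).1 hvw
          exact hvu ((hwt u hu huw).2 h1.symm)
      have : u = w := by
        refine hF u hu w hw hvu hvw hut ?_
        intro x hx
        by_cases hxw : x = w
        · subst hxw
          simp [hvw]
        · exact hwt x hx hxw
      subst this
      simp [hvu]
  · push Not at hex
    set T := N.filter (fun u => ∀ x ∈ X, x ≠ u → (G.Adj v x ↔ G.Adj u x)) with hT
    have hTN : T ⊆ N := Finset.filter_subset _ _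
    have hTm : ∀ u ∈ X, (∀ x ∈ X, x ≠ u → (G.Adj v x ↔ G.Adj u x)) → u ∈ T := by
      intro u hu hut
      have hvu : G.Adj v u := by
        by_contra hvu
        obtain ⟨x, hx, hxx⟩ := hex u hu hvu
        by_cases hxu : x = u
        · subst hxu
          simp [hvu] at hxx
        · have := hut x hx hxu
          tauto
      exact Finset.mem_filter.2 ⟨Finset.mem_filter.2 ⟨hu, hvu⟩, hut⟩
    have hTle := Finset.card_le_card hTN
    let B0 := T.image (fun u => X.filter (D u)) ∪ T.image (fun u => insert u (X.filter (D u)))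
    have hB0 : B0.card ≤ 2 * T.card := by
      refine (Finset.card_union_le _ _).trans ?_
      have h1 := Finset.card_image_le (s := T) (f := fun u => X.filter (D u))
      have h2 := Finset.card_image_le (s := T) (f := fun u => insert u (X.filter (D u)))
      omega
    have hB0m : ∀ u ∈ X, (∀ x ∈ X, x ≠ u → (G.Adj v x ↔ G.Adj u x)) →
        X.filter (D u) ∈ B0 ∧ insert u (X.filter (D u)) ∈ B0 := by
      intro u hu hut
      have := hTm u hu hut
      exact ⟨Finset.mem_union_left _ (Finset.mem_image.2 ⟨u, this, rfl⟩),
        Finset.mem_union_right _ (Finset.mem_image.2 ⟨u, this, rfl⟩)⟩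
    by_cases hfull : ∀ x ∈ X, G.Adj v x
    · have hNe : N = X := Finset.filter_true_of_mem hfull
      refine ⟨B0 ∪ {∅, X}, ?_, ?_, ?_⟩
      · have h1 := Finset.card_union_le B0 {∅, X}
        have h2 := Finset.card_le_two (a := (∅ : Finset V)) (b := X)
        rw [hNe] at hTle ⊢
        have h4 := two_mul_lt_two_pow h3
        by_cases hlt : T.card < X.card
        · omega
        · have hTX : T = X := Finset.eq_of_subset_of_card_le (hNe ▸ hTN) (by omega)
          have h5 : X.card ≠ 3 := by
            intro h5
            refine hK ⟨h5, hfull, ?_⟩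
            intro x hx y hy hxy
            rw [← hTX] at hx
            exact ((Finset.mem_filter.1 hx).2 y hy hxy.symm).1 (hfull y hy)
          have h6 := two_mul_lt_two_pow (d := X.card - 1) (by omega)
          have h7 : 2 ^ X.card = 2 * 2 ^ (X.card - 1) := by
            rw [← pow_succ']
            congr 1
            omega
          omega
      · intro _
        simp
      · intro u hu hut
        have := hB0m u hu hut
        exact ⟨Finset.mem_union_left _ this.1, fun _ => Finset.mem_union_left _ this.2⟩
    · refine ⟨B0, ?_, fun h => absurd h hfull, ?_⟩
      · have hlt : T.card < N.card := by
          by_contra hge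
          have hTN' : T = N := Finset.eq_of_subset_of_card_le hTN (by omega)
          have hno : ∀ x ∈ X, x ∉ N → ∀ y ∈ N, ¬ G.Adj y x := by
            intro x hx hxN y hy hyx
            have hyT := hy
            rw [← hTN'] at hyT
            have hxy : x ≠ y := fun h => hxN (h ▸ hy)
            have := ((Finset.mem_filter.1 hyT).2 x hx hxy).2 hyx
            exact hxN (Finset.mem_filter.2 ⟨hx, this⟩)
          have hno' : ∀ x ∈ X, x ∉ N → ∀ y ∈ N, ¬ D y x ∧ ¬ D x y := fun x hx hxN y hy =>
            hadj y (hNX hy) x hx (hno x hx hxN y hy)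
          have hNneX : N ≠ X := by
            intro h
            refine hfull fun x hx => ?_
            rw [← h] at hx
            exact (Finset.mem_filter.1 hx).2
          have c1 := hp N hNX (by
            intro w hw hwN x hx y hy
            have h1 := hno' w hw hwN x hx
            have h2 := hno' w hw hwN y hy
            tauto)
          have c2 := hp (X \ N) Finset.sdiff_subset (by
            intro w hw hwN x hx y hy
            have hwN' : w ∈ N := by
              by_contra hh
              exact hwN (Finset.mem_sdiff.2 ⟨hw, hh⟩)
            rw [Finset.mem_sdiff] at hx hy
            have h1 := hno' x hx.1 hx.2 w hwN'
            have h2 := hno' y hy.1 hy.2 w hwN'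
            tauto)
          have h5 := Finset.card_sdiff_add_card_eq_card hNX
          rcases c1 with c1 | c1
          · rcases c2 with c2 | c2
            · omega
            · have := congrArg Finset.card c2
              omega
          · exact hNneX c1
        have h8 : N.card < 2 ^ N.card := Nat.lt_two_pow_self
        rcases Nat.lt_or_ge N.card 3 with h | h
        · have : N.card = 1 ∨ N.card = 2 := by omega
          rcases this with h | h <;> rw [h] at hlt ⊢ <;> omega
        · have := two_mul_lt_two_pow h
          omega
      · intro u hu hut
        have := hB0m u hu hut
        exact ⟨this.1, fun _ => this.2⟩

theorem exists_boundary (G : SimpleGraph V) (hconn : G.Connected) (X : Finset V)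
    (hX : X.Nonempty) {w : V} (hw : w ∉ X) : ∃ x ∈ X, ∃ v, v ∉ X ∧ G.Adj v x := by
  obtain ⟨a, ha⟩ := hX
  obtain ⟨p⟩ := hconn.preconnected a w
  obtain ⟨d, -, h1, h2⟩ := p.exists_boundary_dart (X : Set V) ha hw
  exact ⟨d.fst, h1, d.snd, h2, d.adj.symm⟩

/-- Separating vertex for non-twins. -/
theorem exists_separator (G : SimpleGraph V) (hfree : SduoFree G) {u v : V} (huv : u ≠ v)
    (hn : ¬ G.Adj u v) : ∃ w, w ≠ u ∧ w ≠ v ∧ ¬ (G.Adj w u ↔ G.Adj w v) := by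
  by_contra hcon
  push Not at hcon
  refine hfree {u, v} ⟨⟨Set.subset_univ _, ?_⟩, Set.ncard_pair huv, ?_⟩
  · rintro w ⟨-, hw⟩
    simp only [Set.mem_insert_iff, Set.mem_singleton_iff, not_or] at hw
    have := hcon w hw.1 hw.2
    by_cases h : G.Adj w u
    · left
      simp [h, ← this]
    · right
      simp [h, ← this]
  · have hn' : ¬ G.Adj v u := fun h => hn h.symm
    simp [hn, hn']

open Classical in
/-- Extending, or exchanging and extending. -/
theorem goodOn_step (G : SimpleGraph V) (hfree : SduoFree G) (X : Finset V) (v : V) (hv : v ∉ X)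
    (h : GoodOn G X) (hne : ∃ x ∈ X, G.Adj v x)
    (hK : ¬ (X.card = 3 ∧ (∀ x ∈ X, G.Adj v x) ∧ ∀ x ∈ X, ∀ y ∈ X, x ≠ y → G.Adj x y)) :
    ∃ Y, GoodOn G Y ∧ X.card < Y.card := by
  by_cases hF : ∀ u ∈ X, ∀ w ∈ X, ¬ G.Adj v u → ¬ G.Adj v w →
      (∀ x ∈ X, (G.Adj v x ↔ G.Adj u x)) → (∀ x ∈ X, (G.Adj v x ↔ G.Adj w x)) → u = w
  · refine ⟨_, goodOn_extend G X v hv h hne hK hF, ?_⟩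
    rw [Finset.card_insert_of_notMem hv]
    omega
  push Not at hF
  obtain ⟨u, hu, z, hz, hvu, hvz, hut, hzt, huz⟩ := hF
  have hnv : ∀ x ∈ X, x ≠ v := fun x hx h => hv (h ▸ hx)
  let σ := Equiv.swap u v
  have σu : σ u = v := Equiv.swap_apply_left u v
  have σo : ∀ x ∈ X, x ≠ u → σ x = x := fun x hx hxu =>
    Equiv.swap_apply_of_ne_of_ne hxu (hnv x hx)
  set X' := X.map σ.toEmbedding with hX'
  have hg : GoodOn G X' := by
    refine goodOn_perm G X σ ?_ h
    intro x hx y hy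
    by_cases hxu : x = u
    · by_cases hyu : y = u
      · rw [hxu, hyu, σu]
        simp
      · rw [hxu, σu, σo y hy hyu]
        exact hut y hy
    · by_cases hyu : y = u
      · rw [hyu, σu, σo x hx hxu, G.adj_comm, hut x hx, G.adj_comm]
      · rw [σo x hx hxu, σo y hy hyu]
  have hmem : ∀ x, x ∈ X' ↔ x = v ∨ (x ∈ X ∧ x ≠ u) := by
    intro x
    rw [hX', Finset.mem_map]
    constructor
    · rintro ⟨y, hy, rfl⟩
      by_cases hyu : y = u
      · left
        rw [hyu]
        exact σu
      · right
        have : σ.toEmbedding y = y := σo y hy hyu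
        rw [this]
        exact ⟨hy, hyu⟩
    · rintro (rfl | ⟨hx, hxu⟩)
      · exact ⟨u, hu, σu⟩
      · exact ⟨x, hx, σo x hx hxu⟩
  have hvX' : v ∈ X' := (hmem v).2 (Or.inl rfl)
  have hzX' : z ∈ X' := (hmem z).2 (Or.inr ⟨hz, huz.symm⟩)
  obtain ⟨w, hwz, hwv, hsep⟩ := exists_separator G hfree (hnv z hz) (fun h => hvz h.symm)
  have hwX : w ∉ X := by
    intro hw
    have := hzt w hw
    rw [G.adj_comm w, G.adj_comm w] at hsep
    tauto
  have hwX' : w ∉ X' := by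
    rw [hmem]
    tauto
  have htwin : ∀ x ∈ X', (G.Adj x z ↔ G.Adj x v) := by
    intro x hx
    rcases (hmem x).1 hx with rfl | ⟨hx, -⟩
    · simp [hvz]
    · rw [G.adj_comm x, G.adj_comm x, hzt x hx]
  have := goodOn_extend G X' w hwX' hg (by
    by_cases hh : G.Adj w z
    · exact ⟨z, hzX', hh⟩
    · exact ⟨v, hvX', by tauto⟩) (by
    rintro ⟨-, -, hc⟩
    exact hvz (hc v hvX' z hzX' (hnv z hz).symm)) (by
    intro a ha _ _ _ _ hat _
    exfalso
    have h1 := hat z hzX'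
    have h2 := hat v hvX'
    have h3 := htwin a ha
    tauto)
  refine ⟨_, this, ?_⟩
  rw [Finset.card_insert_of_notMem hwX', hX', Finset.card_map]
  omega

open Classical in
theorem exists_goodOn_base [Fintype V] (G : SimpleGraph V) (hcard : 3 ≤ Fintype.card V)
    (hconn : G.Connected) : ∃ X, GoodOn G X := by
  have tri : ∀ a b c : V, G.Adj a b → G.Adj b c → a ≠ c → ∃ X, GoodOn G X := by
    intro a b c hab hbc hac
    by_cases h : G.Adj a c
    · exact ⟨_, goodOn_triangle G hab hbc h⟩
    · exact ⟨_, goodOn_path G hab hbc hac h⟩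
  have hex : ∀ X : Finset V, X.card < 3 → ∃ w, w ∉ X := by
    intro X hX
    by_contra hcon
    push Not at hcon
    have : X = Finset.univ := Finset.eq_univ_of_forall hcon
    rw [this, Finset.card_univ] at hX
    omega
  obtain ⟨a⟩ := hconn.nonempty
  obtain ⟨w, hw⟩ := hex {a} (by simp)
  obtain ⟨x, hx, b, hb, hba⟩ := exists_boundary G hconn {a} (by simp) hw
  rw [Finset.mem_singleton] at hx hb
  subst hx
  obtain ⟨w, hw⟩ := hex {x, b} (Finset.card_le_two.trans_lt (by norm_num))
  obtain ⟨y, hy, c, hc, hcy⟩ := exists_boundary G hconn {x, b} (by simp) hw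
  simp only [Finset.mem_insert, Finset.mem_singleton, not_or] at hy hc
  rcases hy with rfl | rfl
  · exact tri b y c hba hcy.symm (Ne.symm hc.2)
  · exact tri x y c hba.symm hcy.symm (Ne.symm hc.1)

open Classical in
theorem primarilyOrientable_of_good [Fintype V] (G : SimpleGraph V)
    (h : GoodOn G Finset.univ) : PrimarilyOrientable G := by
  obtain ⟨h3, D, hD, hp⟩ := h
  refine ⟨D, fun x y => hD x (Finset.mem_univ _) y (Finset.mem_univ _), h3, ?_⟩
  intro M hM
  rcases hp M.toFinset (Finset.subset_univ _) (by
    intro v _ hv x hx y hy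
    simp only [Set.mem_toFinset] at hv hx hy
    exact hM v hv x hx y hy) with h | h
  · left
    intro x hx y hy
    exact Finset.card_le_one_iff.1 h (Set.mem_toFinset.2 hx) (Set.mem_toFinset.2 hy)
  · right
    exact Set.toFinset_eq_univ.1 h

/-- A connected sduo-free graph with at least three vertices, other than `K₄`, is
primarily orientable. -/
theorem sduo_free_primarily_orientable [Fintype V] (G : SimpleGraph V)
    (hcard : 3 ≤ Fintype.card V)
    (hK4 : ¬ Nonempty (G ≃g (⊤ : SimpleGraph (Fin 4))))
    (hconn : G.Connected) (hfree : SduoFree G) :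
    PrimarilyOrientable G := by
  classical
  have hne : (Finset.univ.filter (fun X : Finset V => GoodOn G X)).Nonempty := by
    obtain ⟨X, hX⟩ := exists_goodOn_base G hcard hconn
    exact ⟨X, by simpa using hX⟩
  obtain ⟨X, hX, hmax⟩ := Finset.exists_max_image _ (fun X => X.card) hne
  replace hX : GoodOn G X := by simpa using hX
  replace hmax : ∀ Y, GoodOn G Y → Y.card ≤ X.card := fun Y hY => hmax Y (by simpa using hY)
  by_cases hu : X = Finset.univ
  · exact primarilyOrientable_of_good G (hu ▸ hX)
  exfalso
  have hex : ∀ Y : Finset V, Y ≠ Finset.univ → ∃ w, w ∉ Y := by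
    intro Y hY
    by_contra hcon
    push Not at hcon
    exact hY (Finset.eq_univ_of_forall hcon)
  obtain ⟨w, hw⟩ := hex X hu
  have hXne : X.Nonempty := Finset.card_pos.1 (by have := hX.1; omega)
  obtain ⟨x, hx, v, hv, hvx⟩ := exists_boundary G hconn X hXne hw
  by_cases hK : X.card = 3 ∧ (∀ x ∈ X, G.Adj v x) ∧ ∀ x ∈ X, ∀ y ∈ X, x ≠ y → G.Adj x y
  swap
  · obtain ⟨Y, hY, hlt⟩ := goodOn_step G hfree X v hv hX ⟨x, hx, hvx⟩ hK
    exact absurd (hmax Y hY) (by omega)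
  obtain ⟨hX3, hvfull, hclq⟩ := hK
  -- `K` is a four-vertex clique
  have hKc : (insert v X).card = 4 := by rw [Finset.card_insert_of_notMem hv, hX3]
  have hKcl : ∀ a ∈ insert v X, ∀ b ∈ insert v X, a ≠ b → G.Adj a b := by
    intro a ha b hb hab
    rw [Finset.mem_insert] at ha hb
    rcases ha with rfl | ha <;> rcases hb with rfl | hb
    · exact absurd rfl hab
    · exact hvfull b hb
    · exact (hvfull a ha).symm
    · exact hclq a ha b hb hab
  generalize insert v X = K at hKc hKcl
  by_cases hKu : K = Finset.univ
  · have h4 : Fintype.card V = 4 := by rw [← Finset.card_univ, ← hKu, hKc]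
    have hG : G = ⊤ := by
      ext a b
      rw [SimpleGraph.top_adj]
      exact ⟨fun h => h.ne, fun h => hKcl a (by simp [hKu]) b (by simp [hKu]) h⟩
    refine hK4 ⟨⟨Fintype.equivFinOfCardEq h4, ?_⟩⟩
    intro a b
    simp [hG]
  obtain ⟨w', hw'⟩ := hex K hKu
  obtain ⟨y, hy, z, hz, hzy⟩ := exists_boundary G hconn K (Finset.card_pos.1 (by omega)) hw'
  by_cases hzf : ∀ a ∈ K, G.Adj z a
  · have h5 : (insert z K).card = 5 := by rw [Finset.card_insert_of_notMem hz, hKc]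
    have := hmax _ (goodOn_five G (insert z K) h5 (by
      intro a ha b hb hab
      rw [Finset.mem_insert] at ha hb
      rcases ha with rfl | ha <;> rcases hb with rfl | hb
      · exact absurd rfl hab
      · exact hzf b hb
      · exact (hzf a ha).symm
      · exact hKcl a ha b hb hab))
    omega
  · push Not at hzf
    obtain ⟨a, ha, hza⟩ := hzf
    have hay : a ≠ y := by
      rintro rfl
      exact hza hzy
    obtain ⟨c, hc, hcn⟩ := Finset.exists_mem_notMem_of_card_lt_card
      (s := {a, y}) (t := K) (Finset.card_le_two.trans_lt (by omega))
    simp only [Finset.mem_insert, Finset.mem_singleton, not_or] at hcn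
    have hg := goodOn_triangle G (hKcl a ha y hy hay) (hKcl y hy c hc (Ne.symm hcn.2))
      (hKcl a ha c hc (Ne.symm hcn.1))
    have hc3 : ({a, y, c} : Finset V).card = 3 :=
      Finset.card_eq_three.2 ⟨a, y, c, hay, Ne.symm hcn.1, Ne.symm hcn.2, rfl⟩
    obtain ⟨Y, hY, hlt⟩ := goodOn_step G hfree {a, y, c} z (by
      simp only [Finset.mem_insert, Finset.mem_singleton, not_or]
      refine ⟨?_, ?_, ?_⟩ <;> rintro rfl <;> exact hz (by assumption)) hg
      ⟨y, by simp, hzy⟩ (fun h => hza (h.2.1 a (by simp)))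
    have := hmax Y hY
    omega
end

section
/- Let D be a digraph and let X ⊆ V(D) be such that the induced subdigraph D[X] is prime. Let u and v be distinct vertices of Ext_D(X). If {u,v} is not a module of D[X ∪ {u,v}], then D[X ∪ {u,v}] is prime. -/
variable {V : Type*}

theorem prime_ext_restrict {D : V → V → Prop} {Y Z M : Set V} (h : DModuleOn D Y M)
    (hZ : Z ⊆ Y) : DModuleOn D Z (M ∩ Z) := by
  refine ⟨Set.inter_subset_right, ?_⟩
  rintro w ⟨hw, hwM⟩ x hx y hy
  exact h.2 w ⟨hZ hw, fun h' => hwM ⟨h', hw⟩⟩ x hx.1 y hy.1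

theorem prime_ext_full {D : V → V → Prop} {X M : Set V} {u v : V} (hX : ¬ X.Subsingleton)
    (hv : v ∈ ExtD D X) (hM : DModuleOn D (X ∪ {u, v}) M)
    (h : M ∩ (X ∪ {u}) = X ∪ {u}) : M = X ∪ {u, v} := by
  have hsub : X ∪ {u} ⊆ M := Set.inter_eq_right.mp h
  by_cases hvM : v ∈ M
  · apply Set.Subset.antisymm hM.1
    rintro x (hx | rfl | rfl)
    · exact hsub (Or.inl hx)
    · exact hsub (Or.inr rfl)
    · exact hvM
  · exfalso
    have h1 : DModuleOn D (X ∪ {v}) X := by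
      refine ⟨Set.subset_union_left, ?_⟩
      rintro w ⟨hw | rfl, hwX⟩ x hx y hy
      · exact absurd hw hwX
      · exact hM.2 w ⟨Or.inr (Or.inr rfl), hvM⟩ x (hsub (Or.inl hx)) y (hsub (Or.inl hy))
    rcases hv.2.2 X h1 with h2 | h2
    · exact hX h2
    · apply hv.1
      rw [h2]
      exact Or.inr rfl

/-- Lemma (ER, 6.3/6.4, assertion 3): if `u ≠ v` belong to `Ext_D(X)` and `{u, v}`
is not a module of `D[X ∪ {u, v}]`, then `D[X ∪ {u, v}]` is prime. -/
theorem prime_extension_ext [Fintype V] (D : V → V → Prop)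
    (X : Set V) (hX : DPrimeOn D X)
    (u v : V) (hu : u ∈ ExtD D X) (hv : v ∈ ExtD D X) (huv : u ≠ v)
    (hmod : ¬ DModuleOn D (X ∪ {u, v}) ({u, v} : Set V)) :
    DPrimeOn D (X ∪ {u, v}) := by
  have hXs : ¬ X.Subsingleton := by
    intro h
    have h1 := hX.1
    have h2 := Set.ncard_le_one_iff_subsingleton.mpr h
    omega
  refine ⟨hX.1.trans (Set.ncard_le_ncard Set.subset_union_left (Set.toFinite _)), ?_⟩
  intro M hM
  have hZu : X ∪ {u} ⊆ X ∪ {u, v} := by grind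
  have hZv : X ∪ {v} ⊆ X ∪ {u, v} := by grind
  rcases hu.2.2 _ (prime_ext_restrict hM hZu) with h1 | h1
  · rcases hv.2.2 _ (prime_ext_restrict hM hZv) with h2 | h2
    · by_contra hcon
      push Not at hcon
      have hns := hcon.1
      apply hmod
      have hMs := hM.1
      have key : M = {u, v} := by
        simp only [Set.Subsingleton] at h1 h2
        obtain ⟨a, ha, b, hb, hab⟩ := hns
        have hm : ∀ x ∈ M, x ∈ X ∨ x = u ∨ x = v := fun x hx => hMs hx
        have h1' : ∀ x ∈ M, ∀ y ∈ M, (x ∈ X ∨ x = u) → (y ∈ X ∨ y = u) → x = y :=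
          fun x hx y hy p q => h1 ⟨hx, p⟩ ⟨hy, q⟩
        have h2' : ∀ x ∈ M, ∀ y ∈ M, (x ∈ X ∨ x = v) → (y ∈ X ∨ y = v) → x = y :=
          fun x hx y hy p q => h2 ⟨hx, p⟩ ⟨hy, q⟩
        clear h1 h2 hM hmod hu hv hX
        have hu' : u ∈ M := by grind
        have hv' : v ∈ M := by grind
        ext x
        simp only [Set.mem_insert_iff, Set.mem_singleton_iff]
        grind
      rw [key] at hM
      exact hM
    · right
      rw [Set.pair_comm] at hM ⊢
      exact prime_ext_full hXs hu hM h2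
  · right
    exact prime_ext_full hXs hv hM h1
end
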